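/- For every prime number p, the modular polynomial Φ_p ∈ ℤ[X,Y] satisfies deg_X(Φ_p) = deg_Y(Φ_p) = p + 1, and its logarithmic height satisfies h(Φ_p) ≤ 6 p log p + 16 p + 14 √p log p; in particular h(Φ_p) = 6 p log p + O(p). -/

import Mathlib

/-!
Degree and height of the modular polynomial of prime level `p`:
`deg_X Φ_p = deg_Y Φ_p = p + 1`, the explicit bound
`h(Φ_p) ≤ 6 p log p + 16 p + 14 √p log p`, and `h(Φ_p) = 6 p log p + O(p)`.
-/

/-- The modular discriminant in the nome. -/
noncomputable def Δ (q : ℂ) : ℂ := q * ∏' n : ℕ, (1 - q ^ (n + 1)) ^ 24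

/-- The normalized Eisenstein series of weight 4 in the nome. -/
noncomputable def E₄ (q : ℂ) : ℂ :=
  1 + 240 * ∑' n : ℕ, (ArithmeticFunction.sigma 3 (n + 1) : ℂ) * q ^ (n + 1)

/-- The modular `j`-invariant in the nome. -/
noncomputable def J (q : ℂ) : ℂ := E₄ q ^ 3 / Δ q

/-- The classical modular `j`-invariant, `j(τ) = J(e^{2πiτ})`. -/
noncomputable def jInv (τ : ℂ) : ℂ := J (Complex.exp (2 * Real.pi * Complex.I * τ))

/-- Evaluation of a bivariate integer polynomial (variable `0` is `X`, variable `1` is `Y`). -/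
noncomputable def evalBiv (P : MvPolynomial (Fin 2) ℤ) (x y : ℂ) : ℂ :=
  MvPolynomial.eval₂ (Int.castRingHom ℂ) ![x, y] P

/-- `P` is the modular polynomial `Φ_N`: irreducible, monic in each of the two
variables, and `P(x, y) = 0` iff `x = j(γτ)`, `y = j(τ)` for some `τ ∈ ℍ` and some
primitive integral matrix `γ = (a b; c d)` of determinant `N` (equivalently, `x, y`
are `j`-invariants of elliptic curves related by a cyclic `N`-isogeny). -/
def IsModularPolynomial (N : ℕ) (P : MvPolynomial (Fin 2) ℤ) : Prop :=
  Irreducible P ∧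
  (MvPolynomial.finSuccEquiv ℤ 1 P).Monic ∧
  (MvPolynomial.finSuccEquiv ℤ 1 (MvPolynomial.rename (⇑(Equiv.swap 0 1)) P)).Monic ∧
  ∀ x y : ℂ, evalBiv P x y = 0 ↔
    ∃ τ : ℂ, 0 < τ.im ∧ ∃ a b c d : ℤ,
      a * d - b * c = (N : ℤ) ∧
      Int.gcd (Int.gcd a b) (Int.gcd c d) = 1 ∧
      x = jInv (((a : ℂ) * τ + b) / ((c : ℂ) * τ + d)) ∧ y = jInv τ

/-- The logarithmic height of an integer polynomial: `log max |coeff|`. -/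
noncomputable def polyHeight (P : MvPolynomial (Fin 2) ℤ) : ℝ :=
  Real.log ((P.support.sup fun m => (MvPolynomial.coeff m P).natAbs : ℕ) : ℝ)

section

/-! ### Modularity of `E₄`, `Δ` and `j` -/

open UpperHalfPlane MatrixGroups in
lemma mp_E4_eq (z : ℍ) : E₄ (Complex.exp (2 * Real.pi * Complex.I * z)) = ModularForm.E₄ z := by
  rw [EisensteinSeries.q_expansion_bernoulli (by norm_num) (by decide) z, E₄]
  have hb : (2 * ((4:ℕ):ℂ) / (bernoulli 4 : ℂ)) = -240 := by
    have : bernoulli 4 = -1/30 := by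
      rw [bernoulli_eq_bernoulli'_of_ne_one (by norm_num), bernoulli'_four]
    rw [this]; norm_num
  rw [hb, sub_eq_add_neg, ← neg_mul, neg_neg]
  congr 2
  rw [← tsum_pnat_eq_tsum_succ (f := fun n : ℕ => (ArithmeticFunction.sigma 3 n : ℂ) * Complex.exp (2 * Real.pi * Complex.I * z) ^ n)]
  simp

open UpperHalfPlane MatrixGroups in
lemma mp_D_eq (z : ℍ) : Δ (Complex.exp (2 * Real.pi * Complex.I * z)) = ModularForm.discriminant z := by
  rw [ModularForm.discriminant_eq_q_prod, Δ]
  have h : Function.Periodic.qParam 1 (z : ℂ) = Complex.exp (2 * Real.pi * Complex.I * z) := by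
    simp [Function.Periodic.qParam]
  simp only [ModularForm.eta_q, h]

open UpperHalfPlane MatrixGroups in
lemma mp_E4_smul (g : SL(2, ℤ)) (z : ℍ) :
    ModularForm.E₄ (g • z) = denom g z ^ 4 * ModularForm.E₄ z := by
  have := SlashInvariantForm.slash_action_eqn'' ModularForm.E₄ (γ := (g : GL (Fin 2) ℝ)) (by exact ⟨g, rfl⟩) z
  simpa using! this

open UpperHalfPlane MatrixGroups in
lemma mp_D_smul (g : SL(2, ℤ)) (z : ℍ) :
    ModularForm.discriminant (g • z) = denom g z ^ 12 * ModularForm.discriminant z := by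
  have := SlashInvariantForm.slash_action_eqn'' CuspForm.discriminant (γ := (g : GL (Fin 2) ℝ)) (by exact ⟨g, rfl⟩) z
  simpa using! this

open UpperHalfPlane MatrixGroups in
lemma mp_jInv_eq (z : ℍ) : jInv z = ModularForm.E₄ z ^ 3 / ModularForm.discriminant z := by
  rw [jInv, _root_.J, mp_E4_eq, mp_D_eq]

open UpperHalfPlane MatrixGroups in
lemma mp_jInv_smul (g : SL(2, ℤ)) (z : ℍ) : jInv ((g • z : ℍ) : ℂ) = jInv z := by
  rw [mp_jInv_eq, mp_jInv_eq, mp_E4_smul, mp_D_smul]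
  have := denom_ne_zero g z
  have h2 := ModularForm.discriminant_ne_zero z
  field_simp

/-- invariant norm of the discriminant -/
noncomputable def mpD (z : UpperHalfPlane) : ℝ := ‖ModularForm.discriminant z‖ * z.im ^ 6

/-- invariant norm of the cube of the Eisenstein series -/
noncomputable def mpE (z : UpperHalfPlane) : ℝ := ‖ModularForm.E₄ z‖ ^ 3 * z.im ^ 6

open UpperHalfPlane MatrixGroups in
lemma mp_im_smul (g : SL(2, ℤ)) (z : ℍ) : (g • z).im = z.im / ‖denom g z‖ ^ 2 := by
  rw [ModularGroup.im_smul_eq_div_normSq, Complex.normSq_eq_norm_sq]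

open UpperHalfPlane MatrixGroups in
lemma mpD_smul (g : SL(2, ℤ)) (z : ℍ) : mpD (g • z) = mpD z := by
  have h : ‖denom g z‖ ≠ 0 := by simp [denom_ne_zero]
  rw [mpD, mpD, mp_D_smul, mp_im_smul, norm_mul, norm_pow]
  field_simp

open UpperHalfPlane MatrixGroups in
lemma mpE_smul (g : SL(2, ℤ)) (z : ℍ) : mpE (g • z) = mpE z := by
  have h : ‖denom g z‖ ≠ 0 := by simp [denom_ne_zero]
  rw [mpE, mpE, mp_E4_smul, mp_im_smul, norm_mul, norm_pow]
  field_simp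

lemma mpD_pos (z : UpperHalfPlane) : 0 < mpD z := by
  have := ModularForm.discriminant_ne_zero z
  have := z.im_pos
  unfold mpD; positivity

lemma mpE_nonneg (z : UpperHalfPlane) : 0 ≤ mpE z := by
  have := z.im_pos
  unfold mpE; positivity

lemma mp_norm_j (z : UpperHalfPlane) : ‖jInv z‖ = mpE z / mpD z := by
  have := ModularForm.discriminant_ne_zero z
  have := z.im_pos
  rw [mp_jInv_eq, mpE, mpD, norm_div, norm_pow]
  field_simp

end

section

/-! ### Explicit estimates for `E₄` and `Δ` -/

/-- the absolute value of the nome -/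
noncomputable def mpr (z : UpperHalfPlane) : ℝ := Real.exp (-(2 * Real.pi * z.im))

lemma mpr_pos (z : UpperHalfPlane) : 0 < mpr z := Real.exp_pos _

lemma mp_norm_q (z : UpperHalfPlane) :
    ‖Complex.exp (2 * Real.pi * Complex.I * z)‖ = mpr z := by
  rw [Complex.norm_exp, mpr]
  congr 1
  simp

lemma mp_pow_four_le (n : ℕ) : ((n : ℝ) + 1) ^ 4 ≤ 16 ^ n := by
  induction n with
  | zero => norm_num
  | succ n ih =>
    rw [pow_succ (16 : ℝ)]
    push_cast
    have h0 : (0:ℝ) ≤ n := Nat.cast_nonneg n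
    calc ((n:ℝ) + 1 + 1) ^ 4 ≤ (2 * ((n:ℝ) + 1)) ^ 4 := by gcongr; linarith
      _ = ((n:ℝ) + 1) ^ 4 * 16 := by ring
      _ ≤ _ := by gcongr

lemma mp_E4_sub_one_le (q : ℂ) (hq : 16 * ‖q‖ < 1) :
    ‖E₄ q - 1‖ ≤ 240 * (‖q‖ / (1 - 16 * ‖q‖)) := by
  have hsum : HasSum (fun n : ℕ => ‖q‖ * (16 * ‖q‖) ^ n) (‖q‖ * (1 - 16 * ‖q‖)⁻¹) :=
    (hasSum_geometric_of_lt_one (by positivity) hq).mul_left _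
  have hb : ∀ n : ℕ, ‖(ArithmeticFunction.sigma 3 (n + 1) : ℂ) * q ^ (n + 1)‖ ≤
      ‖q‖ * (16 * ‖q‖) ^ n := by
    intro n
    rw [norm_mul, norm_pow, Complex.norm_natCast]
    have h1 : ((ArithmeticFunction.sigma 3 (n + 1) : ℕ) : ℝ) ≤ ((n : ℝ) + 1) ^ 4 := by
      exact_mod_cast ArithmeticFunction.sigma_le_pow_succ 3 (n + 1)
    calc _ ≤ (16:ℝ) ^ n * ‖q‖ ^ (n + 1) := by
          gcongr; exact h1.trans (mp_pow_four_le n)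
      _ = _ := by rw [mul_pow]; ring
  have h := tsum_of_norm_bounded hsum hb
  rw [E₄, add_sub_cancel_left, norm_mul]
  have : ‖(240:ℂ)‖ = 240 := by norm_num
  rw [this, div_eq_mul_inv]
  gcongr

lemma mp_D_lower (q : ℂ) (hq : ‖q‖ ≤ 1 / 100) :
    ‖q‖ * (1 - 24 * (‖q‖ / (1 - ‖q‖))) ≤ ‖Δ q‖ := by
  have hq1 : ‖q‖ < 1 := by linarith
  rw [Δ, norm_mul]
  gcongr
  have hm : Multipliable fun n : ℕ => (1 - q ^ (n + 1)) :=
    ModularForm.multipliable_one_sub_pow hq1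
  rw [hm.tprod_pow, norm_pow]
  set x := ‖q‖ with hx
  have hx0 : 0 ≤ x := norm_nonneg _
  have hxx : x / (1 - x) ≤ 1 := by
    rw [div_le_one (by linarith)]; linarith
  have key : 1 - x / (1 - x) ≤ ‖∏' n : ℕ, (1 - q ^ (n + 1))‖ := by
    have ht := (hm.hasProd.tendsto_prod_nat).norm
    refine ge_of_tendsto' ht fun N => ?_
    rw [norm_prod]
    have h1 : ∀ n ∈ Finset.range N, 1 - x ^ (n + 1) ≤ ‖1 - q ^ (n + 1)‖ := by
      intro n _
      have := norm_sub_norm_le (1:ℂ) (q ^ (n + 1))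
      simpa [hx] using this
    have h0 : ∀ n ∈ Finset.range N, x ^ (n + 1) ≤ 1 := fun n _ => pow_le_one₀ hx0 hq1.le
    have h2 : ∏ n ∈ Finset.range N, (1 - x ^ (n + 1)) ≤ ∏ n ∈ Finset.range N, ‖1 - q ^ (n + 1)‖ :=
      Finset.prod_le_prod (fun n hn => by linarith [h0 n hn]) h1
    refine le_trans ?_ h2
    have hs : HasSum (fun n : ℕ => x ^ (n + 1)) (x / (1 - x)) := by
      simpa [pow_succ', div_eq_mul_inv] using (hasSum_geometric_of_lt_one hx0 hq1).mul_left x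
    have h3 : ∑ n ∈ Finset.range N, x ^ (n + 1) ≤ x / (1 - x) :=
      sum_le_hasSum _ (fun n _ => by positivity) hs
    have h4 : ∀ M : ℕ, 1 - ∑ n ∈ Finset.range M, x ^ (n + 1) ≤
        ∏ n ∈ Finset.range M, (1 - x ^ (n + 1)) ∧
        ∏ n ∈ Finset.range M, (1 - x ^ (n + 1)) ≤ 1 := by
      intro M
      induction M with
      | zero => simp
      | succ M ih =>
        rw [Finset.sum_range_succ, Finset.prod_range_succ]
        have a1 : 0 ≤ x ^ (M + 1) := by positivity
        have a2 : x ^ (M + 1) ≤ 1 := pow_le_one₀ hx0 hq1.le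
        have a3 : 0 ≤ ∏ n ∈ Finset.range M, (1 - x ^ (n + 1)) :=
          Finset.prod_nonneg fun n _ => by
            have : x ^ (n + 1) ≤ 1 := pow_le_one₀ hx0 hq1.le
            linarith
        constructor <;> nlinarith [ih.1, ih.2]
    linarith [(h4 N).1]
  calc 1 - 24 * (x / (1 - x)) = 1 + (24:ℕ) * (- (x / (1 - x))) := by push_cast; ring
    _ ≤ (1 + (-(x / (1 - x)))) ^ 24 := one_add_mul_le_pow (by linarith) 24
    _ ≤ _ := by
      apply pow_le_pow_left₀ (by linarith)
      simpa [sub_eq_add_neg] using key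

lemma mp_D_upper (q : ℂ) (hq : ‖q‖ ≤ 1 / 100) :
    ‖Δ q‖ ≤ 2 * ‖q‖ := by
  have hq1 : ‖q‖ < 1 := by linarith
  rw [Δ, norm_mul, mul_comm 2]
  gcongr
  have hm : Multipliable fun n : ℕ => (1 - q ^ (n + 1)) :=
    ModularForm.multipliable_one_sub_pow hq1
  rw [hm.tprod_pow, norm_pow]
  set x := ‖q‖ with hx
  have hx0 : 0 ≤ x := norm_nonneg _
  have hxx : x / (1 - x) ≤ 1 / 99 := by
    rw [div_le_iff₀ (by linarith)]; linarith
  have key : ‖∏' n : ℕ, (1 - q ^ (n + 1))‖ ≤ Real.exp (x / (1 - x)) := by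
    have ht := (hm.hasProd.tendsto_prod_nat).norm
    refine le_of_tendsto' ht fun N => ?_
    rw [norm_prod]
    have h1 : ∀ n ∈ Finset.range N, ‖1 - q ^ (n + 1)‖ ≤ Real.exp (x ^ (n + 1)) := by
      intro n _
      have := norm_sub_le (1:ℂ) (q ^ (n + 1))
      rw [norm_one, norm_pow] at this
      linarith [Real.add_one_le_exp (x ^ (n + 1))]
    refine (Finset.prod_le_prod (fun n hn => norm_nonneg _) h1).trans ?_
    rw [← Real.exp_sum]
    gcongr
    have hs : HasSum (fun n : ℕ => x ^ (n + 1)) (x / (1 - x)) := by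
      simpa [pow_succ', div_eq_mul_inv] using (hasSum_geometric_of_lt_one hx0 hq1).mul_left x
    exact sum_le_hasSum _ (fun n _ => by positivity) hs
  calc _ ≤ (Real.exp (x / (1 - x))) ^ 24 := by gcongr
    _ ≤ (Real.exp (1 / 99)) ^ 24 := by gcongr
    _ = Real.exp (24 / 99) := by rw [← Real.exp_nat_mul]; norm_num
    _ ≤ 2 := by
      have := Real.exp_bound_div_one_sub_of_interval (x := 24/99) (by norm_num) (by norm_num)
      linarith

lemma mp_sqrt3_le {z : UpperHalfPlane} (h : 3 ≤ 4 * z.im ^ 2) : 0.866 ≤ z.im := by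
  by_contra hc
  push Not at hc
  nlinarith [z.im_pos]

lemma mp_exp_neg_le {a b : ℝ} (hb : 0 < b) (h : b⁻¹ ≤ Real.exp a) : Real.exp (-a) ≤ b := by
  rw [Real.exp_neg]
  exact inv_le_of_inv_le₀ hb h

lemma mp_exp_nat_lower (n : ℕ) : (2.718 : ℝ) ^ n ≤ Real.exp n := by
  have := Real.exp_one_gt_d9
  rw [← Real.exp_one_pow]
  gcongr
  linarith

lemma mp_exp_add_lower (n : ℕ) (x : ℝ) (hx : 0 ≤ x) :
    (2.718 : ℝ) ^ n * (1 + x + x ^ 2 / 2) ≤ Real.exp (n + x) := by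
  rw [Real.exp_add]
  have := mp_exp_nat_lower n
  have h2 := Real.quadratic_le_exp_of_nonneg hx
  gcongr

lemma mpr_le_one {z : UpperHalfPlane} (h : 0.866 ≤ z.im) : mpr z ≤ 0.0045 := by
  have hpi := Real.pi_gt_d4
  have h1 : (5:ℕ) + (0.43:ℝ) ≤ 2 * Real.pi * z.im := by norm_num; nlinarith
  unfold mpr
  apply mp_exp_neg_le (by norm_num)
  refine le_trans ?_ (Real.exp_le_exp.mpr h1)
  refine le_trans ?_ (mp_exp_add_lower 5 0.43 (by norm_num))
  norm_num

lemma mpr_le_two {z : UpperHalfPlane} (h : 1 ≤ z.im) : mpr z ≤ 0.0019 := by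
  have hpi := Real.pi_gt_d4
  have h1 : (6:ℕ) + (0.28:ℝ) ≤ 2 * Real.pi * z.im := by norm_num; nlinarith
  unfold mpr
  apply mp_exp_neg_le (by norm_num)
  refine le_trans ?_ (Real.exp_le_exp.mpr h1)
  refine le_trans ?_ (mp_exp_add_lower 6 0.28 (by norm_num))
  norm_num

lemma mpr_le_three {z : UpperHalfPlane} (h : 1.44 ≤ z.im) : mpr z ≤ 0.00013 := by
  have hpi := Real.pi_gt_d4
  have h1 : (9:ℕ) + (0:ℝ) ≤ 2 * Real.pi * z.im := by norm_num; nlinarith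
  unfold mpr
  apply mp_exp_neg_le (by norm_num)
  refine le_trans ?_ (Real.exp_le_exp.mpr h1)
  refine le_trans ?_ (mp_exp_add_lower 9 0 (by norm_num))
  norm_num

lemma mp_E4_sub_one_le' {z : UpperHalfPlane} (h : 0.866 ≤ z.im) :
    ‖ModularForm.E₄ z - 1‖ ≤ 259 * mpr z := by
  have h1 := mpr_le_one h
  have h2 := mp_E4_sub_one_le (Complex.exp (2 * Real.pi * Complex.I * z))
    (by rw [mp_norm_q]; linarith)
  rw [mp_E4_eq, mp_norm_q] at h2
  refine h2.trans ?_
  have h3 := mpr_pos z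
  rw [← mul_div_assoc, div_le_iff₀ (by linarith)]
  nlinarith

lemma mp_D_upper' {z : UpperHalfPlane} (h : 0.866 ≤ z.im) :
    ‖ModularForm.discriminant z‖ ≤ 2 * mpr z := by
  have h1 := mpr_le_one h
  have h2 := mp_D_upper (Complex.exp (2 * Real.pi * Complex.I * z))
    (by rw [mp_norm_q]; linarith)
  rwa [mp_D_eq, mp_norm_q] at h2

lemma mp_D_lower' {z : UpperHalfPlane} (h : 0.866 ≤ z.im) :
    0.89 * mpr z ≤ ‖ModularForm.discriminant z‖ := by
  have h1 := mpr_le_one h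
  have h2 := mp_D_lower (Complex.exp (2 * Real.pi * Complex.I * z))
    (by rw [mp_norm_q]; linarith)
  rw [mp_D_eq, mp_norm_q] at h2
  refine le_trans ?_ h2
  have h3 := mpr_pos z
  rw [mul_comm]
  gcongr
  have : mpr z / (1 - mpr z) ≤ 0.11 / 24 := by
    rw [div_le_iff₀ (by linarith)]
    linarith
  linarith

/-- lower bound for the invariant discriminant low in the fundamental domain -/
lemma mpD_lower {z : UpperHalfPlane} (h : 0.866 ≤ z.im) (h' : z.im ≤ 1) :
    Real.exp (-6.6) ≤ mpD z := by
  have h0 := z.im_pos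
  have h1 := mp_D_lower' h
  have hlog : 1 - z.im⁻¹ ≤ Real.log z.im := Real.one_sub_inv_le_log_of_pos h0
  have hy : Real.exp (6 * (1 - z.im⁻¹)) ≤ z.im ^ 6 := by
    have : z.im ^ 6 = Real.exp (6 * Real.log z.im) := by
      rw [show (6:ℝ) = ((6:ℕ):ℝ) by norm_num, Real.exp_nat_mul, Real.exp_log h0]
    rw [this]
    gcongr
  have h89 : Real.exp (-0.12) ≤ 0.89 := by
    apply mp_exp_neg_le (by norm_num)
    refine le_trans ?_ (Real.quadratic_le_exp_of_nonneg (by norm_num))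
    norm_num
  have hpi : Real.pi < 3.15 := by linarith [Real.pi_lt_d2]
  have hi : z.im * z.im⁻¹ = 1 := mul_inv_cancel₀ h0.ne'
  have hi0 : 0 < z.im⁻¹ := by positivity
  have hmain : 6.3 * z.im + 6 * z.im⁻¹ ≤ 12.48 := by
    have : 6 * z.im⁻¹ = 6 / z.im := by rw [div_eq_mul_inv]
    rw [this, ← le_sub_iff_add_le', div_le_iff₀ h0]
    nlinarith
  calc Real.exp (-6.6) ≤ Real.exp (-0.12 + (-(2 * Real.pi * z.im)) + 6 * (1 - z.im⁻¹)) := by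
        gcongr
        nlinarith
    _ = Real.exp (-0.12) * mpr z * Real.exp (6 * (1 - z.im⁻¹)) := by
        rw [Real.exp_add, Real.exp_add]; rfl
    _ ≤ 0.89 * mpr z * z.im ^ 6 := by
        have := mpr_pos z
        gcongr
    _ ≤ mpD z := by
        unfold mpD
        gcongr

/-- small `j` forces small height -/
lemma mp_im_lt_one {z : UpperHalfPlane} (h : ‖jInv z‖ ≤ 1) : z.im < 1 := by
  by_contra hc
  push Not at hc
  have h0 : 0.866 ≤ z.im := by linarith
  have h1 := mp_E4_sub_one_le' h0
  have h2 := mp_D_upper' h0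
  have h3 := mpr_le_two hc
  have hr := mpr_pos z
  have h4 : 0.5 ≤ ‖ModularForm.E₄ z‖ := by
    have := norm_sub_norm_le (1:ℂ) (1 - ModularForm.E₄ z)
    rw [norm_sub_rev 1, norm_one] at this
    simp only [sub_sub_cancel] at this
    linarith
  have h5 : (0.5:ℝ) ^ 3 ≤ ‖ModularForm.E₄ z‖ ^ 3 := by gcongr
  rw [mp_jInv_eq, norm_div, norm_pow] at h
  have hd : 0 < ‖ModularForm.discriminant z‖ := by simpa using ModularForm.discriminant_ne_zero z
  rw [div_le_one hd] at h
  norm_num at h5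
  linarith

lemma mp_lower_max {z : UpperHalfPlane} (h : 0.866 ≤ z.im) : 0.001 ≤ max (mpE z) (mpD z) := by
  rcases le_total z.im 1 with h1 | h1
  · refine le_max_of_le_right ?_
    have h2 := mpD_lower h h1
    refine le_trans ?_ h2
    rw [Real.exp_neg]
    have : Real.exp 6.6 ≤ 1000 := by
      have h4 : Real.exp (6.6:ℝ) ≤ Real.exp 1 ^ 7 * Real.exp (-0.4) := by
        rw [Real.exp_one_pow, ← Real.exp_add]; norm_num
      have h5 : Real.exp (-0.4) ≤ 0.6757 := by
        apply mp_exp_neg_le (by norm_num)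
        refine le_trans ?_ (Real.quadratic_le_exp_of_nonneg (by norm_num))
        norm_num
      have h6 : Real.exp 1 ^ 7 ≤ 2.7183 ^ 7 := by
        gcongr
        linarith [Real.exp_one_lt_d9]
      have h7 : Real.exp 1 ^ 7 * Real.exp (-0.4) ≤ 2.7183 ^ 7 * 0.6757 := by gcongr
      refine h4.trans (h7.trans ?_)
      norm_num
    rw [le_inv_comm₀ (by norm_num) (Real.exp_pos _)]
    norm_num at this ⊢
    linarith
  · refine le_max_of_le_left ?_
    have h1' := mp_E4_sub_one_le' h
    have h3 := mpr_le_two h1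
    have h4 : 0.5 ≤ ‖ModularForm.E₄ z‖ := by
      have := norm_sub_norm_le (1:ℂ) (1 - ModularForm.E₄ z)
      rw [norm_sub_rev 1, norm_one] at this
      simp only [sub_sub_cancel] at this
      linarith
    unfold mpE
    have h5 : (0.5:ℝ) ^ 3 * 1 ^ 6 ≤ ‖ModularForm.E₄ z‖ ^ 3 * z.im ^ 6 := by gcongr
    norm_num at h5 ⊢
    linarith

lemma mp_u4 {u v : ℝ} (hu : 0 < u) (hv : 0 < v) (hv2 : v ≤ 2) (h : u ≤ v ∨ v = 2) :
    u ^ 4 ≤ v ^ 4 * Real.exp (2 * (u - v)) := by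
  have h1 : u / v ≤ Real.exp (u / v - 1) := by linarith [Real.add_one_le_exp (u / v - 1)]
  have h2 : u ≤ v * Real.exp (u / v - 1) := by
    rw [div_le_iff₀ hv] at h1; linarith
  have h3 : 4 * (u / v - 1) ≤ 2 * (u - v) := by
    rcases h with h | h
    · have : u / v - 1 = (u - v) / v := by field_simp
      rw [this, ← mul_div_assoc, div_le_iff₀ hv]
      nlinarith
    · subst h; linarith
  calc u ^ 4 ≤ (v * Real.exp (u / v - 1)) ^ 4 := by gcongr
    _ = v ^ 4 * Real.exp (4 * (u / v - 1)) := by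
      rw [mul_pow, ← Real.exp_nat_mul]; norm_num
    _ ≤ _ := by gcongr

/-- the upper bound in terms of the square root of the height -/
lemma mp_upper {z : UpperHalfPlane} (h : 0.866 ≤ z.im) :
    mpE z + mpD z ≤ Real.exp (6 * Real.sqrt z.im - 3.3) := by
  have h0 := z.im_pos
  have hr := mpr_pos z
  set u := Real.sqrt z.im with hu
  have hu0 : 0 < u := Real.sqrt_pos.mpr h0
  have hu2 : u ^ 2 = z.im := Real.sq_sqrt h0.le
  have key : (1 + 260 * mpr z) * u ^ 4 ≤ Real.exp (2 * u - 1.1) := by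
    have aux : ∀ (v A B : ℝ), 0 < v → v ≤ 2 → (u ≤ v ∨ v = 2) → 1 + 260 * mpr z ≤ A →
        A * v ^ 4 ≤ B → B ≤ Real.exp (2 * v - 1.1) →
        (1 + 260 * mpr z) * u ^ 4 ≤ Real.exp (2 * u - 1.1) := by
      intro v A B hv hv2 hc hA hB hB'
      have h4 := mp_u4 hu0 hv hv2 hc
      calc (1 + 260 * mpr z) * u ^ 4 ≤ A * (v ^ 4 * Real.exp (2 * (u - v))) := by gcongr; linarith
        _ = A * v ^ 4 * Real.exp (2 * (u - v)) := by ring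
        _ ≤ Real.exp (2 * v - 1.1) * Real.exp (2 * (u - v)) := by gcongr; linarith
        _ = _ := by rw [← Real.exp_add]; congr 1; ring
    rcases le_total z.im 1 with h1 | h1
    · refine aux 1 2.17 2.17 (by norm_num) (by norm_num) (Or.inl ?_) ?_ (by norm_num) ?_
      · rw [hu]; exact Real.sqrt_le_one.mpr h1
      · linarith [mpr_le_one h]
      · refine le_trans ?_ (Real.quadratic_le_exp_of_nonneg (by norm_num))
        norm_num
    · rcases le_total z.im 1.44 with h2 | h2
      · refine aux 1.2 1.5 3.2 (by norm_num) (by norm_num) (Or.inl ?_) ?_ (by norm_num) ?_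
        · rw [hu]; rw [Real.sqrt_le_left (by norm_num)]; linarith
        · linarith [mpr_le_two h1]
        · have : (2 * 1.2 - 1.1 : ℝ) = (1:ℕ) + 0.3 := by norm_num
          rw [this]
          refine le_trans ?_ (mp_exp_add_lower 1 0.3 (by norm_num))
          norm_num
      · refine aux 2 1.035 16.6 (by norm_num) (by norm_num) (Or.inr rfl) ?_ (by norm_num) ?_
        · linarith [mpr_le_three h2]
        · have : (2 * 2 - 1.1 : ℝ) = (2:ℕ) + 0.9 := by norm_num
          rw [this]
          refine le_trans ?_ (mp_exp_add_lower 2 0.9 (by norm_num))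
          norm_num
  have hE : ‖ModularForm.E₄ z‖ ≤ 1 + 259 * mpr z := by
    have h1 := mp_E4_sub_one_le' h
    have h2 := norm_add_le (ModularForm.E₄ z - 1) 1
    rw [norm_one, sub_add_cancel] at h2
    linarith
  have hD := mp_D_upper' h
  have h12 : z.im ^ 6 = (u ^ 4) ^ 3 := by rw [← hu2]; ring
  calc mpE z + mpD z = (‖ModularForm.E₄ z‖ ^ 3 + ‖ModularForm.discriminant z‖) * z.im ^ 6 := by
        unfold mpE mpD; ring
    _ ≤ ((1 + 259 * mpr z) ^ 3 + 2 * mpr z) * z.im ^ 6 := by gcongr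
    _ ≤ (1 + 260 * mpr z) ^ 3 * z.im ^ 6 := by
        gcongr
        nlinarith [mul_pos hr hr, mul_pos hr (mul_pos hr hr)]
    _ = ((1 + 260 * mpr z) * u ^ 4) ^ 3 := by rw [h12]; ring
    _ ≤ (Real.exp (2 * u - 1.1)) ^ 3 := by gcongr
    _ = _ := by rw [← Real.exp_nat_mul]; congr 1; push_cast; ring

end

section

/-! ### Theta series -/

/-- one-dimensional theta constant -/
noncomputable def mpθ (a : ℝ) : ℝ := ∑' n : ℤ, Real.exp (-Real.pi * a * (n : ℝ) ^ 2)

lemma mp_summable_shift {a : ℝ} (ha : 0 < a) (x : ℝ) :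
    Summable fun n : ℤ => Real.exp (-Real.pi * a * ((n : ℝ) + x) ^ 2) := by
  have := (HurwitzZeta.hasSum_int_evenKernel x ha).summable
  refine this.congr fun n => ?_
  congr 1; ring

lemma mp_summable {a : ℝ} (ha : 0 < a) :
    Summable fun n : ℤ => Real.exp (-Real.pi * a * (n : ℝ) ^ 2) := by
  simpa using mp_summable_shift ha 0

lemma mpθ_functional {a : ℝ} (ha : 0 < a) : mpθ a = (Real.sqrt a)⁻¹ * mpθ a⁻¹ := by
  have := Real.tsum_exp_neg_mul_int_sq ha
  rw [mpθ, this, mpθ, Real.sqrt_eq_rpow, one_div]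
  rfl

lemma mpθ_ge_one {a : ℝ} (ha : 0 < a) : 1 ≤ mpθ a := by
  have := (mp_summable ha).le_tsum 0 (fun n _ => (Real.exp_pos _).le)
  simpa [mpθ] using this

lemma mpθ_shift {a : ℝ} (ha : 0 < a) (x : ℝ) :
    ∑' n : ℤ, Real.exp (-Real.pi * a * ((n : ℝ) + x) ^ 2) ≤ mpθ a := by
  have ha' : 0 < a⁻¹ := inv_pos.mpr ha
  have h := Complex.tsum_exp_neg_quadratic (a := ((a⁻¹ : ℝ) : ℂ)) (by simpa using ha)
    (-Complex.I * x)
  have h1 : ∀ n : ℤ, Complex.exp (-Real.pi / ((a⁻¹ : ℝ) : ℂ) * (n + Complex.I * (-Complex.I * x)) ^ 2) =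
      ((Real.exp (-Real.pi * a * ((n : ℝ) + x) ^ 2) : ℝ) : ℂ) := by
    intro n
    push_cast
    congr 1
    rw [show Complex.I * (-Complex.I * (x:ℂ)) = x by
      rw [← mul_assoc, mul_neg, Complex.I_mul_I]; ring]
    field_simp
  simp_rw [h1] at h
  rw [← Complex.ofReal_tsum] at h
  have h2 : ((a⁻¹ : ℝ) : ℂ) ^ (1 / 2 : ℂ) = ((Real.sqrt a⁻¹ : ℝ) : ℂ) := by
    rw [Real.sqrt_eq_rpow, Complex.ofReal_cpow ha'.le]; simp
  rw [h2] at h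
  have hs : 0 < Real.sqrt a⁻¹ := Real.sqrt_pos.mpr ha'
  set S := ∑' n : ℤ, Real.exp (-Real.pi * a * ((n : ℝ) + x) ^ 2) with hS
  have hS0 : 0 ≤ S := tsum_nonneg fun n => (Real.exp_pos _).le
  have h3 : ‖∑' n : ℤ, Complex.exp (-Real.pi * ((a⁻¹ : ℝ) : ℂ) * n ^ 2 +
      2 * Real.pi * (-Complex.I * x) * n)‖ ≤ mpθ a⁻¹ := by
    apply tsum_of_norm_bounded (mp_summable ha').hasSum
    intro n
    rw [Complex.norm_exp]
    apply le_of_eq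
    congr 1
    simp [← Complex.ofReal_intCast, ← Complex.ofReal_pow, ← Complex.ofReal_inv]
  rw [h, norm_mul, norm_div, Complex.norm_real, Complex.norm_real, norm_one, Real.norm_of_nonneg hS0,
    Real.norm_of_nonneg hs.le] at h3
  have h4 := mpθ_functional ha'
  rw [inv_inv] at h4
  rw [h4, one_div] at h3
  exact le_of_mul_le_mul_left h3 (inv_pos.mpr hs)

lemma mpθ_le {a : ℝ} (ha : 1.7 ≤ a) : mpθ a ≤ 1.015 := by
  have ha0 : 0 < a := by linarith
  have hpi := Real.pi_gt_d4
  set r := Real.exp (-5.3) with hr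
  have hr0 : 0 < r := Real.exp_pos _
  have hr1 : r ≤ 0.0057 := by
    rw [hr]
    apply mp_exp_neg_le (by norm_num)
    rw [show (5.3:ℝ) = (5:ℕ) + 0.3 by norm_num]
    refine le_trans ?_ (mp_exp_add_lower 5 0.3 (by norm_num))
    norm_num
  have h := HasSum.of_nat_of_neg_add_one (f := fun n : ℤ => r ^ n.natAbs) 
    (m := (1 - r)⁻¹) (m' := r * (1 - r)⁻¹) ?_ ?_
  · have hle : mpθ a ≤ (1 - r)⁻¹ + r * (1 - r)⁻¹ := by
      refine hasSum_le ?_ (mp_summable ha0).hasSum h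
      intro n
      rw [hr, ← Real.exp_nat_mul]
      apply Real.exp_le_exp.mpr
      have h1 : (n.natAbs : ℝ) ≤ (n:ℝ) ^ 2 := by
        rw [Nat.cast_natAbs, ← sq_abs, sq, ← Int.cast_abs]
        rw [← Int.cast_mul, Int.cast_le, abs_mul_abs_self, ← sq, Int.abs_eq_natAbs]
        exact Int.natAbs_le_self_sq n
      have h3 : (0:ℝ) ≤ n.natAbs := Nat.cast_nonneg _
      have h4 : 5.3 ≤ Real.pi * a := by nlinarith
      nlinarith
    refine hle.trans ?_
    rw [← one_add_mul, ← div_eq_mul_inv, div_le_iff₀ (by linarith)]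
    linarith
  · simpa using hasSum_geometric_of_lt_one hr0.le (by linarith)
  · have := (hasSum_geometric_of_lt_one hr0.le (by linarith)).mul_left r
    have hf : (fun n : ℕ => (fun n : ℤ => r ^ n.natAbs) (-((n:ℤ) + 1))) = fun n : ℕ => r * r ^ n := by
      funext n
      change r ^ (-((n:ℤ) + 1)).natAbs = _
      rw [show (-((n:ℤ) + 1)).natAbs = n + 1 by omega, pow_succ']
    rw [hf]
    exact this

/-- two-dimensional theta series of a point of the upper half plane -/
noncomputable def mpΘ (z : UpperHalfPlane) : ENNReal :=
  ∑' c : ℤ, ∑' d : ℤ, ENNReal.ofReal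
    (Real.exp (-Real.pi * (((d : ℝ) + c * z.re) ^ 2 + (c * z.im) ^ 2) / z.im))

lemma mpθ_ennreal {a : ℝ} (ha : 0 < a) :
    ∑' n : ℤ, ENNReal.ofReal (Real.exp (-Real.pi * a * (n : ℝ) ^ 2)) = ENNReal.ofReal (mpθ a) :=
  (ENNReal.ofReal_tsum_of_nonneg (fun n => (Real.exp_pos _).le) (mp_summable ha)).symm

lemma mpθ_shift_ennreal {a : ℝ} (ha : 0 < a) (x : ℝ) :
    ∑' n : ℤ, ENNReal.ofReal (Real.exp (-Real.pi * a * ((n : ℝ) + x) ^ 2)) ≤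
      ENNReal.ofReal (mpθ a) := by
  rw [← ENNReal.ofReal_tsum_of_nonneg (fun n => (Real.exp_pos _).le) (mp_summable_shift ha x)]
  exact ENNReal.ofReal_le_ofReal (mpθ_shift ha x)

open UpperHalfPlane MatrixGroups in
/-- the theta series dominates the square root of the height of every translate -/
lemma mpΘ_lower (g : SL(2, ℤ)) (z : ℍ) :
    ENNReal.ofReal (Real.sqrt (g • z).im) ≤ mpΘ z := by
  set h := (g • z).im with hh
  have h0 : 0 < h := (g • z).im_pos
  have hz := z.im_pos
  have hinv : (h⁻¹)⁻¹ = h := inv_inv h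
  have h1 : Real.sqrt h ≤ mpθ h⁻¹ := by
    rw [mpθ_functional (inv_pos.mpr h0), inv_inv, Real.sqrt_inv, inv_inv]
    have := mpθ_ge_one h0
    nlinarith [Real.sqrt_nonneg h]
  refine (ENNReal.ofReal_le_ofReal h1).trans ?_
  rw [← mpθ_ennreal (inv_pos.mpr h0), mpΘ, ← ENNReal.tsum_prod
    (f := fun c d : ℤ => ENNReal.ofReal
    (Real.exp (-Real.pi * (((d : ℝ) + c * z.re) ^ 2 + (c * z.im) ^ 2) / z.im)))]
  have hinj : Function.Injective (fun k : ℤ => ((k * g 1 0, k * g 1 1) : ℤ × ℤ)) := by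
    intro k l hkl
    simp only [Prod.mk.injEq] at hkl
    have hdet := Matrix.SpecialLinearGroup.det_coe g
    rw [Matrix.det_fin_two] at hdet
    calc k = k * (g 0 0 * g 1 1 - g 0 1 * g 1 0) := by rw [hdet, mul_one]
      _ = g 0 0 * (k * g 1 1) - g 0 1 * (k * g 1 0) := by ring
      _ = g 0 0 * (l * g 1 1) - g 0 1 * (l * g 1 0) := by rw [hkl.1, hkl.2]
      _ = l * (g 0 0 * g 1 1 - g 0 1 * g 1 0) := by ring
      _ = l := by rw [hdet, mul_one]
  refine le_trans (le_of_eq ?_) (ENNReal.tsum_comp_le_tsum_of_injective hinj _)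
  refine tsum_congr fun k => ?_
  congr 2
  have him : h⁻¹ = ((g 1 1 + g 1 0 * z.re) ^ 2 + (g 1 0 * z.im) ^ 2) / z.im := by
    rw [hh, ModularGroup.im_smul_eq_div_normSq, inv_div, Complex.normSq_apply,
      ModularGroup.denom_apply]
    simp
    ring
  rw [him]
  push_cast
  ring

end

section

/-! ### The p+1 points above a given point -/

open UpperHalfPlane in
/-- the points `p z` and `(z+b)/p` -/
noncomputable def mpPt (p : ℕ) [NeZero p] (z : ℍ) : Option (Fin p) → ℍ
  | none => ⟨(p : ℂ) * z, by
      have hp : (0:ℝ) < p := by exact_mod_cast Nat.pos_of_ne_zero (NeZero.ne p)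
      have := z.im_pos
      simp only [Complex.mul_im, Complex.natCast_re, Complex.natCast_im, zero_mul, add_zero]
      exact mul_pos hp this⟩
  | some b => ⟨((z : ℂ) + (b : ℕ)) / p, by
      have hp : (0:ℝ) < p := by exact_mod_cast Nat.pos_of_ne_zero (NeZero.ne p)
      have := z.im_pos
      rw [Complex.div_natCast_im]
      simp only [Complex.add_im, Complex.natCast_im, add_zero]
      exact div_pos this hp⟩

section
open UpperHalfPlane
variable (p : ℕ) [NeZero p] (z : ℍ)

lemma mpPt_none_coe : ((mpPt p z none : ℍ) : ℂ) = p * z := rfl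
lemma mpPt_some_coe (b : Fin p) : ((mpPt p z (some b) : ℍ) : ℂ) = (z + (b : ℕ)) / p := rfl
lemma mpPt_none_re : (mpPt p z none).re = p * z.re := by
  change ((p : ℂ) * z).re = _
  simp
lemma mpPt_none_im : (mpPt p z none).im = p * z.im := by
  change ((p : ℂ) * z).im = _
  simp
lemma mpPt_some_re (b : Fin p) : (mpPt p z (some b)).re = (z.re + (b : ℕ)) / p := by
  change (((z : ℂ) + (b : ℕ)) / p).re = _
  rw [Complex.div_natCast_re]; simp
lemma mpPt_some_im (b : Fin p) : (mpPt p z (some b)).im = z.im / p := by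
  change (((z : ℂ) + (b : ℕ)) / p).im = _
  rw [Complex.div_natCast_im]; simp
end

lemma mp_tsum_mul (p : ℕ) (hp : p ≠ 0) (g : ℤ → ENNReal) :
    ∑' c : ℤ, g (p * c) = ∑' c : ℤ, if (p : ℤ) ∣ c then g c else 0 := by
  have hinj : Function.Injective (fun c : ℤ => (p : ℤ) * c) := fun a b h => by
    simpa [hp] using h
  rw [← hinj.tsum_eq (f := fun c : ℤ => if (p : ℤ) ∣ c then g c else 0)]
  · simp
  · intro c hc
    by_contra hcon
    apply hc
    have : ¬ (p : ℤ) ∣ c := fun ⟨k, hk⟩ => hcon ⟨k, hk.symm⟩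
    simp [this]

lemma mp_lattice_sum (p : ℕ) (hp : p.Prime) (f : ℤ → ℤ → ENNReal) :
    ∑' c : ℤ, ∑' d : ℤ, f (p * c) d +
      ∑ b : Fin p, ∑' c : ℤ, ∑' d : ℤ, f c (c * ((b : ℕ) : ℤ) + p * d) ≤
    ∑' c : ℤ, ∑' d : ℤ, f c d + p * ∑' c : ℤ, ∑' d : ℤ, f (p * c) (p * d) := by
  have hp0 := hp.ne_zero
  rw [mp_tsum_mul p hp0 (fun c => ∑' d : ℤ, f c d),
    mp_tsum_mul p hp0 (fun c => ∑' d : ℤ, f c (p * d))]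
  have hswap : ∑ b : Fin p, ∑' c : ℤ, ∑' d : ℤ, f c (c * ((b : ℕ) : ℤ) + p * d) =
      ∑' c : ℤ, ∑ b : Fin p, ∑' d : ℤ, f c (c * ((b : ℕ) : ℤ) + p * d) :=
    (Summable.tsum_finsetSum fun _ _ => ENNReal.summable).symm
  rw [hswap, ← ENNReal.tsum_mul_left, ← ENNReal.tsum_add, ← ENNReal.tsum_add]
  refine ENNReal.tsum_le_tsum fun c => ?_
  by_cases hc : (p : ℤ) ∣ c
  · simp only [hc, if_true]
    gcongr
    obtain ⟨k, rfl⟩ := hc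
    have : ∀ b : Fin p, ∑' d : ℤ, f (p * k) (p * k * ((b : ℕ) : ℤ) + p * d) =
        ∑' d : ℤ, f (p * k) (p * d) := by
      intro b
      rw [← (Equiv.addLeft (k * ((b : ℕ) : ℤ))).tsum_eq (fun d : ℤ => f (p * k) (p * d))]
      refine tsum_congr fun d => ?_
      congr 1
      simp only [Equiv.coe_addLeft]
      ring
    simp [this]
  · simp only [hc, if_false, mul_zero, zero_add, add_zero]
    have hinj : Function.Injective
        (fun x : Fin p × ℤ => c * ((x.1 : ℕ) : ℤ) + p * x.2) := by
      rintro ⟨b, d⟩ ⟨b', d'⟩ h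
      simp only at h
      have hdvd : (p : ℤ) ∣ c * (((b : ℕ) : ℤ) - ((b' : ℕ) : ℤ)) :=
        ⟨d' - d, by linear_combination h⟩
      have hpp : Prime (p : ℤ) := Nat.prime_iff_prime_int.mp hp
      have hb := (hpp.dvd_or_dvd hdvd).resolve_left hc
      have hbb : ((b : ℕ) : ℤ) - ((b' : ℕ) : ℤ) = 0 := by
        apply Int.eq_zero_of_abs_lt_dvd hb
        have := b.2
        have := b'.2
        rw [abs_lt]; constructor <;> omega
      have hb' : b = b' := Fin.ext (by omega)
      subst hb'
      have : (p : ℤ) * d = p * d' := by linear_combination h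
      have : d = d' := by
        simpa [hp0] using this
      rw [this]
    calc ∑ b : Fin p, ∑' d : ℤ, f c (c * ((b : ℕ) : ℤ) + p * d)
        = ∑' x : Fin p × ℤ, f c (c * ((x.1 : ℕ) : ℤ) + p * x.2) := by
          rw [ENNReal.tsum_prod (f := fun (b : Fin p) (d : ℤ) => f c (c * ((b : ℕ) : ℤ) + p * d)),
            tsum_fintype]
      _ ≤ _ := ENNReal.tsum_comp_le_tsum_of_injective hinj (f c)

lemma mp_gauss_sum {A B x : ℝ} (hA : 0 < A) (hB : 0 < B) :
    ∑' c : ℤ, ∑' d : ℤ, ENNReal.ofReal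
      (Real.exp (-Real.pi * A * ((d : ℝ) + c * x) ^ 2 + -Real.pi * B * (c : ℝ) ^ 2)) ≤
    ENNReal.ofReal (mpθ A * mpθ B) := by
  have hA1 := mpθ_ge_one hA
  rw [ENNReal.ofReal_mul (by linarith), ← mpθ_ennreal hB, ← ENNReal.tsum_mul_left]
  refine ENNReal.tsum_le_tsum fun c => ?_
  refine le_trans ?_ (mul_le_mul_left (mpθ_shift_ennreal hA (c * x)) _)
  rw [← ENNReal.tsum_mul_right]
  refine ENNReal.tsum_le_tsum fun d => ?_
  rw [← ENNReal.ofReal_mul (Real.exp_pos _).le, ← Real.exp_add]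

open UpperHalfPlane in
lemma mpΘ_sum (p : ℕ) [NeZero p] (hp : p.Prime) (z : ℍ) :
    ∑ i, mpΘ (mpPt p z i) ≤
      ENNReal.ofReal (2 * p * (mpθ (p * z.im) * mpθ (p / z.im))) := by
  have hp0 : (0:ℝ) < p := by exact_mod_cast hp.pos
  have hy := z.im_pos
  set x := z.re
  set y := z.im
  have h := mp_lattice_sum p hp (fun c d => ENNReal.ofReal
    (Real.exp (-Real.pi * (((d : ℝ) + c * x) ^ 2 + (c * y) ^ 2) / (p * y))))
  rw [Fintype.sum_option]
  have e1 : mpΘ (mpPt p z none) = ∑' c : ℤ, ∑' d : ℤ, ENNReal.ofReal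
    (Real.exp (-Real.pi * (((d : ℝ) + ((p * c : ℤ) : ℝ) * x) ^ 2 + (((p * c : ℤ) : ℝ) * y) ^ 2) / (p * y))) := by
    rw [mpΘ, mpPt_none_re, mpPt_none_im]
    refine tsum_congr fun c => tsum_congr fun d => ?_
    congr 3
    push_cast
    ring
  have e2 : ∀ b : Fin p, mpΘ (mpPt p z (some b)) = ∑' c : ℤ, ∑' d : ℤ, ENNReal.ofReal
    (Real.exp (-Real.pi * ((((c * ((b : ℕ) : ℤ) + p * d : ℤ) : ℝ) + c * x) ^ 2 + (c * y) ^ 2) / (p * y))) := by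
    intro b
    rw [mpΘ, mpPt_some_re, mpPt_some_im]
    refine tsum_congr fun c => tsum_congr fun d => ?_
    congr 2
    push_cast
    change -Real.pi * (((d:ℝ) + c * ((x + (b:ℕ)) / p)) ^ 2 + (c * (y / p)) ^ 2) / (y / p) = _
    field_simp
    ring
  rw [e1, Finset.sum_congr rfl (fun b _ => e2 b)]
  refine h.trans ?_
  have b1 := mp_gauss_sum (A := (p * y)⁻¹) (B := (p / y)⁻¹) (x := x) (by positivity) (by positivity)
  have b2 := mp_gauss_sum (A := (p / y)) (B := p * y) (x := x) (by positivity) (by positivity)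
  have e3 : mpθ (p * y)⁻¹ * mpθ (p / y)⁻¹ = p * (mpθ (p * y) * mpθ (p / y)) := by
    rw [mpθ_functional (a := (p * y)⁻¹) (by positivity),
      mpθ_functional (a := (p / y)⁻¹) (by positivity), inv_inv, inv_inv]
    have : (√(p * y)⁻¹)⁻¹ * (√(p / y)⁻¹)⁻¹ = p := by
      rw [Real.sqrt_inv, Real.sqrt_inv, inv_inv, inv_inv, ← Real.sqrt_mul (by positivity),
        show (p * y) * (p / y) = (p:ℝ) ^ 2 by field_simp, Real.sqrt_sq hp0.le]
    linear_combination (mpθ (p * y) * mpθ (p / y)) * this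
  rw [e3] at b1
  have hθ : 0 ≤ mpθ (p * y) * mpθ (p / y) :=
    mul_nonneg (by linarith [mpθ_ge_one (a := p * y) (by positivity)])
      (by linarith [mpθ_ge_one (a := p / y) (by positivity)])
  rw [show 2 * p * (mpθ (p * y) * mpθ (p / y)) = p * (mpθ (p * y) * mpθ (p / y)) +
    p * (mpθ (p * y) * mpθ (p / y)) by ring, ENNReal.ofReal_add (by positivity) (by positivity)]
  refine add_le_add (le_trans (le_of_eq ?_) b1) ?_
  · refine tsum_congr fun c => tsum_congr fun d => ?_
    congr 2
    field_simp
    ring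
  · rw [ENNReal.ofReal_mul hp0.le, ENNReal.ofReal_natCast]
    refine mul_le_mul_right (le_trans (le_of_eq ?_) (b2.trans (le_of_eq (by rw [mul_comm])))) _
    refine tsum_congr fun c => tsum_congr fun d => ?_
    congr 2
    push_cast
    field_simp
    ring

open UpperHalfPlane MatrixGroups in
lemma mp_sum_sqrt (p : ℕ) [NeZero p] (hp : p.Prime) (z : ℍ) (h1 : 0.866 ≤ z.im) (h2 : z.im ≤ 1)
    (g : Option (Fin p) → SL(2, ℤ)) :
    ∑ i, Real.sqrt (g i • mpPt p z i).im ≤ 2.061 * p := by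
  have hp2 : (2:ℝ) ≤ p := by exact_mod_cast hp.two_le
  have hy := z.im_pos
  have h := mpΘ_sum p hp z
  have h3 : ENNReal.ofReal (∑ i, Real.sqrt (g i • mpPt p z i).im) ≤
      ENNReal.ofReal (2 * p * (mpθ (p * z.im) * mpθ (p / z.im))) := by
    refine le_trans ?_ h
    rw [ENNReal.ofReal_sum_of_nonneg (fun i _ => Real.sqrt_nonneg _)]
    exact Finset.sum_le_sum fun i _ => mpΘ_lower _ _
  have a1 : mpθ (p * z.im) ≤ 1.015 := mpθ_le (by nlinarith)
  have a2 : mpθ (p / z.im) ≤ 1.015 := mpθ_le (by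
    rw [le_div_iff₀ hy]; nlinarith)
  have c1 := mpθ_ge_one (a := p * z.im) (by positivity)
  have c2 := mpθ_ge_one (a := p / z.im) (by positivity)
  have h4 := (ENNReal.ofReal_le_ofReal_iff (by positivity)).mp h3
  have h5 : mpθ (p * z.im) * mpθ (p / z.im) ≤ 1.015 * 1.015 :=
    mul_le_mul a1 a2 (by linarith) (by norm_num)
  nlinarith

end

section

/-! ### The product of the discriminants -/

lemma mp_mult_inj (p : ℕ) (hp : p ≠ 0) : Function.Injective (fun m : ℕ => p * (m + 1) - 1) := by
  intro a b h
  have hp1 : 1 ≤ p := Nat.one_le_iff_ne_zero.mpr hp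
  have h1 : 1 ≤ p * (a + 1) := Nat.mul_pos hp1 (Nat.succ_pos _)
  have h2 : 1 ≤ p * (b + 1) := Nat.mul_pos hp1 (Nat.succ_pos _)
  have h3 : p * (a + 1) = p * (b + 1) := by
    simp only at h
    omega
  have := Nat.eq_of_mul_eq_mul_left hp1 h3
  omega

lemma mp_mult_range (p : ℕ) (hp : p ≠ 0) (f : ℕ → ℂ) :
    ∀ x ∉ Set.range (fun m : ℕ => p * (m + 1) - 1), (if p ∣ x + 1 then f x else 1) = 1 := by
  intro x hx
  have : ¬ p ∣ x + 1 := by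
    rintro ⟨k, hk⟩
    apply hx
    have hk0 : k ≠ 0 := by rintro rfl; simp at hk
    refine ⟨k - 1, ?_⟩
    simp only
    rw [Nat.sub_add_cancel (Nat.one_le_iff_ne_zero.mpr hk0)]
    omega
  simp [this]

lemma mp_hasProd_mult (p : ℕ) (hp : p ≠ 0) (f : ℕ → ℂ) (a : ℂ)
    (h : HasProd (fun m : ℕ => f (p * (m + 1) - 1)) a) :
    HasProd (fun n => if p ∣ n + 1 then f n else 1) a := by
  rw [← (mp_mult_inj p hp).hasProd_iff (mp_mult_range p hp f)]
  convert h using 1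
  funext m
  have h1 : 1 ≤ p * (m + 1) := Nat.mul_pos (Nat.pos_of_ne_zero hp) (Nat.succ_pos _)
  have : p ∣ p * (m + 1) - 1 + 1 := by
    rw [Nat.sub_add_cancel h1]; exact dvd_mul_right _ _
  simp [Function.comp, this]

lemma mp_prod_root (p : ℕ) (hp : p.Prime) {ζ : ℂ} (hζ : IsPrimitiveRoot ζ p) (t : ℂ) (n : ℕ) :
    ∏ b : Fin p, (1 - (ζ ^ (b : ℕ) * t) ^ n) =
      if p ∣ n then (1 - t ^ n) ^ p else 1 - t ^ (p * n) := by
  split_ifs with h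
  · have : ∀ b : Fin p, (1 - (ζ ^ (b : ℕ) * t) ^ n) = 1 - t ^ n := by
      intro b
      have h1 := (hζ.pow_eq_one_iff_dvd n).mpr h
      rw [mul_pow, ← pow_mul, mul_comm (b : ℕ) n, pow_mul, h1, one_pow, one_mul]
    simp [this]
  · have hζn : IsPrimitiveRoot (ζ ^ n) p :=
      hζ.pow_of_coprime n ((Nat.Prime.coprime_iff_not_dvd hp).mpr h).symm
    have := X_pow_sub_C_eq_prod hζn hp.pos (α := t ^ n) rfl
    have h2 := congrArg (Polynomial.eval 1) this
    simp only [Polynomial.eval_sub, Polynomial.eval_pow, Polynomial.eval_X, Polynomial.eval_C,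
      Polynomial.eval_prod, one_pow] at h2
    rw [← pow_mul, mul_comm n p] at h2
    rw [h2, ← Fin.prod_univ_eq_prod_range (fun b => 1 - (ζ ^ n) ^ b * t ^ n)]
    refine Finset.prod_congr rfl fun b _ => ?_
    rw [mul_pow, ← pow_mul, ← pow_mul, mul_comm n]

lemma mp_eta_prod (p : ℕ) (hp : p.Prime) {ζ : ℂ} (hζ : IsPrimitiveRoot ζ p) (t : ℂ) (ht : ‖t‖ < 1) :
    (∏' n : ℕ, (1 - (t ^ (p * p)) ^ (n + 1))) *
      ∏ b : Fin p, ∏' n : ℕ, (1 - (ζ ^ (b : ℕ) * t) ^ (n + 1)) =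
    (∏' n : ℕ, (1 - (t ^ p) ^ (n + 1))) ^ (p + 1) := by
  have hp0 := hp.ne_zero
  have hζ1 : ‖ζ‖ = 1 := hζ.norm'_eq_one hp0
  have hm : ∀ b : Fin p, Multipliable fun n : ℕ => 1 - (ζ ^ (b : ℕ) * t) ^ (n + 1) := fun b =>
    ModularForm.multipliable_one_sub_pow (by simpa [hζ1] using ht)
  have hm1 : Multipliable fun n : ℕ => 1 - (t ^ p) ^ (n + 1) :=
    ModularForm.multipliable_one_sub_pow (by rw [norm_pow]; exact pow_lt_one₀ (norm_nonneg _) ht hp0)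
  have hm2 : Multipliable fun n : ℕ => 1 - (t ^ (p * p)) ^ (n + 1) :=
    ModularForm.multipliable_one_sub_pow
      (by rw [norm_pow]; exact pow_lt_one₀ (norm_nonneg _) ht (mul_ne_zero hp0 hp0))
  have hsub : ∀ m : ℕ, p * (m + 1) - 1 + 1 = p * (m + 1) := fun m =>
    Nat.sub_add_cancel (Nat.mul_pos hp.pos (Nat.succ_pos _))
  have A1 := mp_hasProd_mult p hp0 (fun n => 1 - t ^ (p * (n + 1)))
    (∏' n : ℕ, (1 - (t ^ (p * p)) ^ (n + 1))) (by
      simp only [hsub, ← mul_assoc]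
      simpa only [← pow_mul] using hm2.hasProd)
  have A2 := mp_hasProd_mult p hp0 (fun n => (1 - t ^ (n + 1)) ^ p)
    ((∏' n : ℕ, (1 - (t ^ p) ^ (n + 1))) ^ p) (by
      simp only [hsub]
      simpa only [← pow_mul] using hm1.hasProd.pow p)
  have A3 : HasProd (fun n : ℕ => ∏ b : Fin p, (1 - (ζ ^ (b : ℕ) * t) ^ (n + 1)))
      (∏ b : Fin p, ∏' n : ℕ, (1 - (ζ ^ (b : ℕ) * t) ^ (n + 1))) :=
    hasProd_prod fun b _ => (hm b).hasProd
  have A4 := A1.mul A3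
  have A5 := A2.mul hm1.hasProd
  rw [pow_succ]
  refine HasProd.unique A4 ?_
  convert A5 using 1
  funext n
  rw [mp_prod_root p hp hζ]
  split_ifs
  · rw [← pow_mul]; ring
  · rw [← pow_mul]

lemma mp_Delta_norm (q : ℂ) (hq : ‖q‖ < 1) :
    ‖Δ q‖ = ‖q‖ * ‖∏' n : ℕ, (1 - q ^ (n + 1))‖ ^ 24 := by
  rw [Δ, (ModularForm.multipliable_one_sub_pow hq).tprod_pow, norm_mul, norm_pow]

lemma mp_Delta_prod (p : ℕ) (hp : p.Prime) {ζ : ℂ} (hζ : IsPrimitiveRoot ζ p) (t : ℂ)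
    (ht : ‖t‖ < 1) :
    ‖Δ (t ^ (p * p))‖ * ∏ b : Fin p, ‖Δ (ζ ^ (b : ℕ) * t)‖ = ‖Δ (t ^ p)‖ ^ (p + 1) := by
  have hp0 := hp.ne_zero
  have hζ1 : ‖ζ‖ = 1 := hζ.norm'_eq_one hp0
  have hb : ∀ b : Fin p, ‖Δ (ζ ^ (b : ℕ) * t)‖ =
      ‖t‖ * ‖∏' n : ℕ, (1 - (ζ ^ (b : ℕ) * t) ^ (n + 1))‖ ^ 24 := fun b => by
    rw [mp_Delta_norm _ (by simpa [hζ1] using ht)]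
    simp [hζ1]
  rw [Finset.prod_congr rfl (fun b _ => hb b), mp_Delta_norm (t ^ p)
    (by rw [norm_pow]; exact pow_lt_one₀ (norm_nonneg _) ht hp0), mp_Delta_norm (t ^ (p * p))
    (by rw [norm_pow]; exact pow_lt_one₀ (norm_nonneg _) ht (mul_ne_zero hp0 hp0)),
    Finset.prod_mul_distrib, Finset.prod_pow, Finset.prod_const, Finset.card_univ, Fintype.card_fin]
  have := congrArg norm (mp_eta_prod p hp hζ t ht)
  rw [norm_mul, norm_pow, norm_prod] at this
  rw [norm_pow, norm_pow, mul_pow, ← pow_mul _ 24, mul_comm 24 (p+1), pow_mul _ (p+1), ← this]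
  ring

open UpperHalfPlane in
lemma mp_disc_prod (p : ℕ) [NeZero p] (hp : p.Prime) (z : ℍ) :
    ∏ i, ‖ModularForm.discriminant (mpPt p z i)‖ = ‖ModularForm.discriminant z‖ ^ (p + 1) := by
  have hp0 : (p : ℂ) ≠ 0 := by exact_mod_cast hp.ne_zero
  have hpr : (0:ℝ) < p := by exact_mod_cast hp.pos
  rw [Fintype.prod_option]
  set t := Complex.exp (2 * Real.pi * Complex.I * (z / p)) with ht
  set ζ := Complex.exp (2 * Real.pi * Complex.I / p) with hζ
  have hζp : IsPrimitiveRoot ζ p := Complex.isPrimitiveRoot_exp p hp.ne_zero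
  have ht1 : ‖t‖ < 1 := by
    rw [ht, Complex.norm_exp, Real.exp_lt_one_iff]
    have : (2 * Real.pi * Complex.I * (z / p) : ℂ).re = - (2 * Real.pi * (z.im / p)) := by
      simp [Complex.div_natCast_im]
    rw [this]
    have := div_pos z.im_pos hpr
    have := Real.pi_pos
    simp only [Left.neg_neg_iff]
    positivity
  have := mp_Delta_prod p hp hζp t ht1
  have e1 : t ^ p = Complex.exp (2 * Real.pi * Complex.I * z) := by
    rw [ht, ← Complex.exp_nat_mul]; congr 1; field_simp
  have e2 : t ^ (p * p) = Complex.exp (2 * Real.pi * Complex.I * (mpPt p z none : ℍ)) := by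
    rw [ht, ← Complex.exp_nat_mul, mpPt_none_coe]; congr 1; push_cast; field_simp
  have e3 : ∀ b : Fin p, ζ ^ (b : ℕ) * t =
      Complex.exp (2 * Real.pi * Complex.I * (mpPt p z (some b) : ℍ)) := fun b => by
    rw [ht, hζ, ← Complex.exp_nat_mul, ← Complex.exp_add, mpPt_some_coe]; congr 1; field_simp; ring
  simp only [e1, e2, e3, mp_D_eq] at this
  exact this

open UpperHalfPlane in
lemma mpD_prod (p : ℕ) [NeZero p] (hp : p.Prime) (z : ℍ) :
    (∏ i, mpD (mpPt p z i)) * (p:ℝ) ^ (6 * (p - 1)) = mpD z ^ (p + 1) := by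
  have hpr : (0:ℝ) < p := by exact_mod_cast hp.pos
  simp only [mpD]
  rw [Finset.prod_mul_distrib, mp_disc_prod p hp, mul_pow, mul_assoc]
  congr 1
  rw [Fintype.prod_option, mpPt_none_im]
  simp only [mpPt_some_im, Finset.prod_const, Finset.card_univ, Fintype.card_fin]
  obtain ⟨k, hk⟩ : ∃ k, p = k + 1 := ⟨p - 1, by have := hp.pos; omega⟩
  have : p - 1 = k := by omega
  rw [this, div_pow, div_pow]
  have h2 : ((p:ℝ) ^ 6) ^ p = p ^ 6 * (p:ℝ) ^ (6 * k) := by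
    rw [← pow_mul, ← pow_add]; congr 1; omega
  rw [h2]
  field_simp
  ring

end

section

/-! ### Injectivity of the modular invariant near the cusp -/

lemma mp_E4_diff : DifferentiableOn ℂ E₄ (Metric.ball (0:ℂ) (1 / 32)) := by
  unfold E₄
  refine (differentiableOn_const _).add ((differentiableOn_const _).mul ?_)
  refine Complex.differentiableOn_tsum_of_summable_norm (u := fun n : ℕ => (1 / 2 : ℝ) ^ n)
    summable_geometric_two ?_ Metric.isOpen_ball ?_
  · intro n
    fun_prop
  · intro n q hq
    have hq' : ‖q‖ < 1 / 32 := by simpa using hq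
    rw [norm_mul, norm_pow, Complex.norm_natCast]
    have h1 : (ArithmeticFunction.sigma 3 (n + 1) : ℝ) ≤ 16 ^ n := by
      have h2 : ((ArithmeticFunction.sigma 3 (n + 1) : ℕ) : ℝ) ≤ ((n : ℝ) + 1) ^ 4 := by
        exact_mod_cast ArithmeticFunction.sigma_le_pow_succ 3 (n + 1)
      exact h2.trans (mp_pow_four_le n)
    calc (ArithmeticFunction.sigma 3 (n + 1) : ℝ) * ‖q‖ ^ (n + 1)
        ≤ 16 ^ n * (1 / 32) ^ (n + 1) := by gcongr
      _ ≤ (1 / 2) ^ n := by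
        rw [pow_succ, ← mul_assoc, ← mul_pow]
        norm_num

lemma mp_E4_zero : E₄ 0 = 1 := by
  simp [E₄]

lemma mp_G_strict : HasStrictDerivAt (fun q : ℂ => Δ q / E₄ q ^ 3) 1 0 := by
  have hE : DifferentiableAt ℂ E₄ 0 :=
    mp_E4_diff.differentiableAt (Metric.ball_mem_nhds 0 (by norm_num))
  set F := fun q : ℂ => ∏' n : ℕ, (1 - q ^ (n + 1)) ^ 24 with hF
  have hFd : DifferentiableOn ℂ F (Metric.ball 0 1) :=
    ModularForm.differentiableOn_tprod_one_sub_pow_pow 24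
  have hF0 : F 0 = 1 := by simp [hF]
  have hFa : AnalyticAt ℂ F 0 := hFd.analyticAt (Metric.ball_mem_nhds 0 (by norm_num))
  have hEa : AnalyticAt ℂ E₄ 0 := mp_E4_diff.analyticAt (Metric.ball_mem_nhds 0 (by norm_num))
  have hG : (fun q : ℂ => Δ q / E₄ q ^ 3) = fun q => q * (F q / E₄ q ^ 3) := by
    funext q
    rw [Δ]; ring
  rw [hG]
  have hH : AnalyticAt ℂ (fun q => F q / E₄ q ^ 3) 0 :=
    hFa.div (hEa.pow 3) (by simp [mp_E4_zero])
  have := (hasStrictDerivAt_id (0:ℂ)).fun_mul hH.hasStrictDerivAt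
  simpa only [id, mp_E4_zero, hF0, one_pow, div_one, mul_one, zero_mul, add_zero] using this

lemma mp_J_inj : ∃ ε > 0, ∀ q q' : ℂ, ‖q‖ < ε → ‖q'‖ < ε → _root_.J q = _root_.J q' → q = q' := by
  have h := (hasStrictDerivAt_iff_hasStrictFDerivAt.mp mp_G_strict).isLittleO
  have h2 := (h.def (show (0:ℝ) < 1 / 2 by norm_num))
  rw [Metric.eventually_nhds_iff] at h2
  obtain ⟨ε, hε, h3⟩ := h2
  refine ⟨ε, hε, fun q q' hq hq' hJ => ?_⟩
  have h4 := @h3 (q, q') (by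
    rw [Prod.dist_eq]
    simpa using ⟨hq, hq'⟩)
  have hG : Δ q / E₄ q ^ 3 = Δ q' / E₄ q' ^ 3 := by
    rw [_root_.J, _root_.J] at hJ
    rw [← inv_div, hJ, inv_div]
  simp only [hG] at h4
  simp at h4
  rw [norm_sub_rev] at h4
  have : ‖q - q'‖ ≤ 0 := by
    linarith [norm_nonneg (q - q'), h4]
  exact sub_eq_zero.mp (norm_le_zero_iff.mp this)

section
open UpperHalfPlane MatrixGroups

lemma mp_j_upper {z : ℍ} (h : 0.866 ≤ z.im) : ‖jInv z‖ * mpr z ≤ 12 := by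
  rw [mp_jInv_eq, norm_div, norm_pow]
  have h1 := mp_E4_sub_one_le' h
  have h2 := mp_D_lower' h
  have h3 := mpr_le_one h
  have h4 := mpr_pos z
  have h5 : ‖ModularForm.E₄ z‖ ≤ 2.2 := by
    calc ‖ModularForm.E₄ z‖ = ‖(ModularForm.E₄ z - 1) + 1‖ := by ring_nf
      _ ≤ ‖ModularForm.E₄ z - 1‖ + 1 := by simpa using norm_add_le (ModularForm.E₄ z - 1) 1
      _ ≤ 2.2 := by linarith
  have h6 : ‖ModularForm.E₄ z‖ ^ 3 ≤ 2.2 ^ 3 := by gcongr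
  have h7 : 0 < ‖ModularForm.discriminant z‖ := by nlinarith
  rw [div_mul_eq_mul_div, div_le_iff₀ h7]
  nlinarith

lemma mp_j_lower {z : ℍ} (h : 1 ≤ z.im) : 0.06 ≤ ‖jInv z‖ * mpr z := by
  rw [mp_jInv_eq, norm_div, norm_pow]
  have h1 := mp_E4_sub_one_le' (z := z) (by linarith)
  have h2 := mp_D_lower' (z := z) (by linarith)
  have h2' := mp_D_upper' (z := z) (by linarith)
  have h3 := mpr_le_two h
  have h4 := mpr_pos z
  have h5 : 0.5 ≤ ‖ModularForm.E₄ z‖ := by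
    have := norm_sub_norm_le (1:ℂ) (1 - ModularForm.E₄ z)
    rw [norm_sub_rev] at h1
    simp only [norm_one, sub_sub_cancel] at this
    linarith
  have h6 : (0.5:ℝ) ^ 3 ≤ ‖ModularForm.E₄ z‖ ^ 3 := by gcongr
  have h7 : 0 < ‖ModularForm.discriminant z‖ := by nlinarith
  rw [div_mul_eq_mul_div, le_div_iff₀ h7]
  nlinarith

lemma mpr_tendsto (ε : ℝ) (hε : 0 < ε) : ∃ Y : ℝ, 1 ≤ Y ∧ ∀ z : ℍ, Y ≤ z.im → mpr z < ε := by
  refine ⟨max 1 (1 / ε), le_max_left _ _, fun z hz => ?_⟩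
  have h1 : 1 / ε ≤ z.im := (le_max_right _ _).trans hz
  have hpi := Real.pi_gt_three
  have hz0 := z.im_pos
  have h2 : 1 / ε < Real.exp (2 * Real.pi * z.im) := by
    have := Real.add_one_le_exp (2 * Real.pi * z.im)
    nlinarith
  rw [mpr, Real.exp_neg, inv_lt_comm₀ (Real.exp_pos _) hε]
  rwa [one_div] at h2

lemma mp_exp_eq {z w : ℍ} (h : Complex.exp (2 * Real.pi * Complex.I * z) =
    Complex.exp (2 * Real.pi * Complex.I * w)) : ∃ n : ℤ, (z : ℂ) = w + n := by
  obtain ⟨n, hn⟩ := Complex.exp_eq_exp_iff_exists_int.mp h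
  refine ⟨n, ?_⟩
  have h2 : (2 * Real.pi * Complex.I : ℂ) ≠ 0 := Complex.two_pi_I_ne_zero
  apply mul_left_cancel₀ h2
  linear_combination hn

lemma mp_reduce (w : ℍ) : ∃ g : SL(2, ℤ), 0.866 ≤ (g • w).im := by
  obtain ⟨g, hg⟩ := ModularGroup.exists_smul_mem_fd w
  exact ⟨g, mp_sqrt3_le (ModularGroup.three_le_four_mul_im_sq_of_mem_fd hg)⟩

lemma mp_cusp : ∃ Y : ℝ, 1 ≤ Y ∧ ∀ z w : ℍ, Y ≤ z.im → 0.866 ≤ w.im → jInv z = jInv w →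
    ∃ n : ℤ, (z : ℂ) = w + n := by
  obtain ⟨ε, hε, hinj⟩ := mp_J_inj
  obtain ⟨Y, hY1, hY⟩ := mpr_tendsto (ε / 200) (by positivity)
  refine ⟨Y, hY1, fun z w hz hw hj => ?_⟩
  have hz' := hY z hz
  apply mp_exp_eq
  have a1 := mp_j_lower (hY1.trans hz)
  have a2 := mp_j_upper hw
  rw [← hj] at a2
  have h3 := mpr_pos z
  have h4 := mpr_pos w
  have h5 : mpr w ≤ 200 * mpr z := by
    have h6 : 0 < ‖jInv z‖ := by
      by_contra hc
      nlinarith [norm_nonneg (jInv z)]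
    by_contra hc
    push Not at hc
    nlinarith
  apply hinj
  · rw [mp_norm_q]; linarith
  · rw [mp_norm_q]; linarith
  · exact hj

lemma mp_cusp_equiv : ∃ Y : ℝ, 1 ≤ Y ∧ ∀ z w : ℍ, Y ≤ z.im → jInv z = jInv w →
    ∃ g : SL(2, ℤ), w = g • z := by
  obtain ⟨Y, hY1, hY⟩ := mp_cusp
  refine ⟨Y, hY1, fun z w hz hj => ?_⟩
  obtain ⟨g, hg⟩ := mp_reduce w
  obtain ⟨n, hn⟩ := hY z (g • w) hz hg (by rw [mp_jInv_smul, hj])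
  refine ⟨g⁻¹ * ModularGroup.T ^ (-n), ?_⟩
  rw [mul_smul, eq_inv_smul_iff]
  apply UpperHalfPlane.ext
  rw [ModularGroup.coe_T_zpow_smul_eq, hn]
  push_cast
  ring

end

end

section

/-! ### Integral matrices of prime determinant -/

section
open UpperHalfPlane MatrixGroups

lemma mp_sl_coe (a b c d : ℤ) (h : a * d - b * c = 1) (w : ℍ) : ∃ g : SL(2, ℤ),
    ((g • w : ℍ) : ℂ) = (a * w + b) / (c * w + d) := by
  let g : SL(2, ℤ) := ⟨!![a, b; c, d], by rw [Matrix.det_fin_two]; simpa using h⟩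
  refine ⟨g, (coe_specialLinearGroup_apply g w).trans ?_⟩
  have h0 : g 0 0 = a := rfl
  have h1 : g 0 1 = b := rfl
  have h2 : g 1 0 = c := rfl
  have h3 : g 1 1 = d := rfl
  rw [h0, h1, h2, h3]
  simp

lemma mp_matrix (p : ℕ) [NeZero p] (hp : p.Prime) (a b c d : ℤ) (h : a * d - b * c = p) (z : ℍ) :
    ∃ i, ∃ g : SL(2, ℤ), ((a * z + b) / (c * z + d) : ℂ) = (g • mpPt p z i : ℍ) := by
  have hp0 : (p : ℂ) ≠ 0 := by exact_mod_cast hp.ne_zero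
  obtain ⟨a', ha'⟩ := Int.gcd_dvd_left a c
  obtain ⟨c', hc'⟩ := Int.gcd_dvd_right a c
  have hdvd : ((Int.gcd a c : ℕ) : ℤ) ∣ p := by
    rw [← h]
    exact dvd_sub (Dvd.dvd.mul_right (Int.gcd_dvd_left a c) _)
      (Dvd.dvd.mul_left (Int.gcd_dvd_right a c) _)
  have hdvd' : Int.gcd a c ∣ p := by exact_mod_cast hdvd
  rcases (Nat.dvd_prime hp).mp hdvd' with h1 | h1
  · -- primitive first column
    have hbez := Int.gcd_eq_gcd_ab a c
    rw [h1] at hbez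
    set u := Int.gcdA a c
    set v := Int.gcdB a c
    set N := u * b + v * d with hN
    have hpz : (0:ℤ) < p := by exact_mod_cast hp.pos
    have hk0 := Int.emod_nonneg N hpz.ne'
    have hk1 := Int.emod_lt_of_pos N hpz
    have hk2 := Int.emod_add_mul_ediv N p
    set m := N / p
    obtain ⟨k, hk⟩ := Int.eq_ofNat_of_zero_le hk0
    rw [hk] at hk1 hk2
    have hkp : k < p := by exact_mod_cast hk1
    obtain ⟨g, hg⟩ := mp_sl_coe a (-v + a * m) c (u + c * m) (by push_cast at hbez; linear_combination -hbez)
      (mpPt p z (some ⟨k, hkp⟩))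
    refine ⟨some ⟨k, hkp⟩, g, ?_⟩
    rw [hg, mpPt_some_coe]
    have e1 : (b : ℤ) = a * k + p * (-v + a * m) := by
      push_cast at hbez
      linear_combination (-a) * hk2 + (-v) * h - b * (-hbez)
    have e2 : (d : ℤ) = c * k + p * (u + c * m) := by
      push_cast at hbez
      linear_combination (-c) * hk2 + u * h - d * (-hbez)
    have e1' : (b : ℂ) = a * k + p * (-v + a * m) := by exact_mod_cast e1
    have e2' : (d : ℂ) = c * k + p * (u + c * m) := by exact_mod_cast e2
    rw [e1', e2']
    push_cast
    rw [← mul_div_mul_right _ _ hp0]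
    rw [show ((a:ℂ) * ((z + k) / p) + (-v + a * m)) = (a * z + (a * k + p * (-v + a * m))) / p by
      field_simp; ring, show ((c:ℂ) * ((z + k) / p) + (u + c * m)) = (c * z + (c * k + p * (u + c * m))) / p by
      field_simp; ring]
    rw [div_div_div_cancel_right₀ hp0, mul_div_mul_right _ _ hp0]
  · rw [h1] at ha' hc'
    have hpz : (p : ℤ) ≠ 0 := by exact_mod_cast hp.ne_zero
    obtain ⟨g, hg⟩ := mp_sl_coe a' b c' d (by
      apply mul_left_cancel₀ hpz
      rw [ha', hc'] at h
      linear_combination h) (mpPt p z none)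
    refine ⟨none, g, ?_⟩
    rw [hg, mpPt_none_coe, ha', hc']
    push_cast
    ring_nf

lemma mp_matrix' (p : ℕ) [NeZero p] (z : ℍ) (i : Option (Fin p)) :
    ∃ a b c d : ℤ, a * d - b * c = (p : ℤ) ∧ Int.gcd (Int.gcd a b) (Int.gcd c d) = 1 ∧
      ((mpPt p z i : ℍ) : ℂ) = (a * z + b) / (c * z + d) := by
  rcases i with _ | b
  · refine ⟨p, 0, 0, 1, by ring, by simp, ?_⟩
    rw [mpPt_none_coe]; simp
  · refine ⟨1, (b : ℕ), 0, p, by ring, by simp, ?_⟩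
    rw [mpPt_some_coe]; simp

lemma mp_swap_aux {N : ℕ} (hN : 0 < N) {x y : ℂ}
    (h : ∃ τ : ℂ, 0 < τ.im ∧ ∃ a b c d : ℤ, a * d - b * c = (N : ℤ) ∧
      Int.gcd (Int.gcd a b) (Int.gcd c d) = 1 ∧
      x = jInv (((a : ℂ) * τ + b) / ((c : ℂ) * τ + d)) ∧ y = jInv τ) :
    ∃ τ : ℂ, 0 < τ.im ∧ ∃ a b c d : ℤ, a * d - b * c = (N : ℤ) ∧
      Int.gcd (Int.gcd a b) (Int.gcd c d) = 1 ∧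
      y = jInv (((a : ℂ) * τ + b) / ((c : ℂ) * τ + d)) ∧ x = jInv τ := by
  obtain ⟨τ, hτ, a, b, c, d, hdet, hgcd, hx, hy⟩ := h
  have hdetR : (a:ℝ) * d - b * c = N := by exact_mod_cast hdet
  have hdetC : (a:ℂ) * d - b * c = N := by exact_mod_cast hdet
  have hNR : (0:ℝ) < N := by exact_mod_cast hN
  have hNC : (N:ℂ) ≠ 0 := by exact_mod_cast hN.ne'
  have hden : (c:ℂ) * τ + d ≠ 0 := by
    intro h0
    have h1 := congrArg Complex.im h0
    have h2 := congrArg Complex.re h0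
    simp at h1 h2
    rcases h1 with h1 | h1
    · simp [h1] at h2
      simp [h1, h2] at hdet
      omega
    · exact hτ.ne' h1
  refine ⟨((a : ℂ) * τ + b) / ((c : ℂ) * τ + d), ?_, d, -b, -c, a, ?_, ?_, ?_, hx⟩
  · have : (((a : ℂ) * τ + b) / ((c : ℂ) * τ + d)).im =
        N * τ.im / Complex.normSq ((c : ℂ) * τ + d) := by
      rw [Complex.div_im, ← hdetR, ← sub_div]
      congr 1
      simp
      ring
    rw [this]
    have := Complex.normSq_pos.mpr hden
    positivity
  · linear_combination hdet
  · rw [Int.gcd_neg, Int.gcd_comm d b, Int.neg_gcd, Int.gcd_comm c a]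
    have : ∀ q : ℤ, q ∣ a → q ∣ b → q ∣ c → q ∣ d → IsUnit q := by
      intro q ha hb hc hd
      have h1 : q ∣ ((Int.gcd (Int.gcd a b) (Int.gcd c d) : ℕ) : ℤ) :=
        Int.dvd_coe_gcd (Int.dvd_coe_gcd ha hb) (Int.dvd_coe_gcd hc hd)
      rw [hgcd] at h1
      exact isUnit_of_dvd_one (by exact_mod_cast h1)
    have hu := this (Int.gcd (Int.gcd b d) (Int.gcd a c) : ℕ)
      ((Int.gcd_dvd_right _ _).trans (Int.gcd_dvd_left _ _))
      ((Int.gcd_dvd_left _ _).trans (Int.gcd_dvd_left _ _))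
      ((Int.gcd_dvd_right _ _).trans (Int.gcd_dvd_right _ _))
      ((Int.gcd_dvd_left _ _).trans (Int.gcd_dvd_right _ _))
    rw [Int.ofNat_isUnit] at hu
    exact Nat.isUnit_iff.mp hu
  · rw [hy]
    congr 1
    have h3 : (-c : ℂ) * (a * τ + b) + a * (c * τ + d) = N := by linear_combination hdetC
    push_cast
    rw [← mul_div_assoc, ← mul_div_assoc, div_add' _ _ _ hden, div_add' _ _ _ hden,
      div_div_div_cancel_right₀ hden, h3, eq_div_iff hNC]
    linear_combination (-τ) * hdetC

end

lemma mp_evalBiv_rename (P : MvPolynomial (Fin 2) ℤ) (x y : ℂ) :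
    evalBiv (MvPolynomial.rename (⇑(Equiv.swap (0 : Fin 2) 1)) P) x y = evalBiv P y x := by
  rw [evalBiv, evalBiv, MvPolynomial.eval₂_rename]
  congr 1
  funext i
  fin_cases i <;> simp

lemma mp_swap {N : ℕ} (hN : 0 < N) {P : MvPolynomial (Fin 2) ℤ} (h : IsModularPolynomial N P) :
    IsModularPolynomial N (MvPolynomial.rename (⇑(Equiv.swap (0 : Fin 2) 1)) P) := by
  obtain ⟨h1, h2, h3, h4⟩ := h
  have hrr : MvPolynomial.rename (⇑(Equiv.swap (0 : Fin 2) 1))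
      (MvPolynomial.rename (⇑(Equiv.swap (0 : Fin 2) 1)) P) = P := by
    rw [MvPolynomial.rename_rename]
    have : (⇑(Equiv.swap (0 : Fin 2) 1) ∘ ⇑(Equiv.swap (0 : Fin 2) 1)) = id := by
      funext i; simp
    rw [this, MvPolynomial.rename_id]; rfl
  refine ⟨?_, h3, ?_, fun x y => ?_⟩
  · have := (MulEquiv.irreducible_iff (MvPolynomial.renameEquiv ℤ (Equiv.swap (0 : Fin 2) 1))).mpr h1
    simpa using this
  · rwa [hrr]
  · rw [mp_evalBiv_rename, h4]
    exact ⟨mp_swap_aux hN, mp_swap_aux hN⟩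

lemma mp_degree_swap (P : MvPolynomial (Fin 2) ℤ) :
    MvPolynomial.degreeOf 0 (MvPolynomial.rename (⇑(Equiv.swap (0 : Fin 2) 1)) P) =
      MvPolynomial.degreeOf 1 P := by
  have := MvPolynomial.degreeOf_rename_of_injective (p := P)
    (Equiv.swap (0 : Fin 2) 1).injective 1
  simpa using this

end

section

/-! ### Specialization of the second variable -/

/-- the polynomial `P(X, y)` -/
noncomputable def mpF (P : MvPolynomial (Fin 2) ℤ) (y : ℂ) : Polynomial ℂ :=
  (MvPolynomial.finSuccEquiv ℤ 1 P).map
    (MvPolynomial.eval₂Hom (Int.castRingHom ℂ) (fun _ : Fin 1 => y))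

lemma mpF_eval (P : MvPolynomial (Fin 2) ℤ) (x y : ℂ) : (mpF P y).eval x = evalBiv P x y := by
  rw [mpF, evalBiv]
  induction P using MvPolynomial.induction_on with
  | C a =>
    rw [MvPolynomial.eval₂_C, MvPolynomial.finSuccEquiv_apply, MvPolynomial.coe_eval₂Hom,
      MvPolynomial.eval₂_C, RingHom.comp_apply, Polynomial.map_C, Polynomial.eval_C,
      MvPolynomial.coe_eval₂Hom, MvPolynomial.eval₂_C]
  | add p q hp hq => simp only [map_add, Polynomial.map_add, Polynomial.eval_add, hp, hq,
      MvPolynomial.eval₂_add]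
  | mul_X p i hp =>
    simp only [map_mul, Polynomial.map_mul, Polynomial.eval_mul, hp, MvPolynomial.eval₂_mul]
    congr 1
    refine Fin.cases ?_ (fun j => ?_) i
    · simp [MvPolynomial.finSuccEquiv_X_zero]
    · rw [MvPolynomial.finSuccEquiv_X_succ]
      have : j = 0 := Subsingleton.elim _ _
      subst this
      simp

lemma mpF_monic {P : MvPolynomial (Fin 2) ℤ} (h : (MvPolynomial.finSuccEquiv ℤ 1 P).Monic) (y : ℂ) :
    (mpF P y).Monic := h.map _

lemma mpF_natDegree {P : MvPolynomial (Fin 2) ℤ} (h : (MvPolynomial.finSuccEquiv ℤ 1 P).Monic) (y : ℂ) :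
    (mpF P y).natDegree = MvPolynomial.degreeOf 0 P := by
  rw [mpF, h.natDegree_map, MvPolynomial.natDegree_finSuccEquiv]

lemma mp_sep {P : MvPolynomial (Fin 2) ℤ} (hirr : Irreducible P)
    (h : (MvPolynomial.finSuccEquiv ℤ 1 P).Monic) :
    ∃ c : MvPolynomial (Fin 1) ℤ, c ≠ 0 ∧ ∀ y : ℂ,
      MvPolynomial.eval₂ (Int.castRingHom ℂ) (fun _ => y) c ≠ 0 → (mpF P y).Separable := by
  set R := MvPolynomial (Fin 1) ℤ with hR
  set K := FractionRing R with hK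
  set f : Polynomial R := MvPolynomial.finSuccEquiv ℤ 1 P with hf
  have hfi : Irreducible f :=
    (MulEquiv.irreducible_iff (MvPolynomial.finSuccEquiv ℤ 1)).mpr hirr
  have hfK : Irreducible (f.map (algebraMap R K)) :=
    (h.irreducible_iff_irreducible_map_fraction_map).mp hfi
  have hchar : CharZero K := charZero_of_injective_algebraMap (IsFractionRing.injective R K)
  have hs : (f.map (algebraMap R K)).Separable := hfK.separable
  obtain ⟨a, b, hab⟩ := hs
  obtain ⟨s, hsM, hs⟩ := IsLocalization.integerNormalization_spec (nonZeroDivisors R) a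
  obtain ⟨t, htM, ht⟩ := IsLocalization.integerNormalization_spec (nonZeroDivisors R) b
  set a' := IsLocalization.integerNormalization (nonZeroDivisors R) a
  set b' := IsLocalization.integerNormalization (nonZeroDivisors R) b
  have hs0 : (s : R) ≠ 0 := nonZeroDivisors.ne_zero hsM
  have ht0 : (t : R) ≠ 0 := nonZeroDivisors.ne_zero htM
  refine ⟨s * t, mul_ne_zero hs0 ht0, ?_⟩
  have key : Polynomial.C (t : R) * a' * f + Polynomial.C (s : R) * b' * Polynomial.derivative f =
      Polynomial.C ((s : R) * t) := by
    apply Polynomial.map_injective (algebraMap R K) (IsFractionRing.injective R K)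
    simp only [Polynomial.map_add, Polynomial.map_mul, Polynomial.map_C, hs, ht,
      ← Polynomial.derivative_map, Algebra.smul_def, map_mul]
    have e : ∀ r : R, algebraMap R (Polynomial K) r = Polynomial.C (algebraMap R K r) := fun r => rfl
    rw [e, e]
    linear_combination (Polynomial.C (algebraMap R K s) * Polynomial.C (algebraMap R K t)) * hab
  intro y hy
  set φ := MvPolynomial.eval₂Hom (Int.castRingHom ℂ) (fun _ : Fin 1 => y) with hφ
  have hy' : φ ((s : R) * t) ≠ 0 := hy
  have key2 := congrArg (Polynomial.map φ) key
  simp only [Polynomial.map_add, Polynomial.map_mul, Polynomial.map_C,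
      ← Polynomial.derivative_map] at key2
  refine ⟨Polynomial.C (φ ((s : R) * t))⁻¹ * (Polynomial.C (φ t) * a'.map φ),
    Polynomial.C (φ ((s : R) * t))⁻¹ * (Polynomial.C (φ s) * b'.map φ), ?_⟩
  have hC : Polynomial.C (φ ((s : R) * t))⁻¹ * Polynomial.C (φ ((s : R) * t)) = 1 := by
    rw [← Polynomial.C_mul, inv_mul_cancel₀ hy', Polynomial.C_1]
  rw [← hC, ← key2]
  simp only [mpF]
  ring

lemma mp_nonvanish (c : MvPolynomial (Fin 1) ℤ) (hc : c ≠ 0) : ∃ B : ℝ, ∀ y : ℂ, B < ‖y‖ →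
    MvPolynomial.eval₂ (Int.castRingHom ℂ) (fun _ => y) c ≠ 0 := by
  set f : Polynomial ℤ := MvPolynomial.uniqueAlgEquiv ℤ (Fin 1) c with hf
  have hf0 : f ≠ 0 := by
    rw [hf, Ne, EmbeddingLike.map_eq_zero_iff]; exact hc
  set g := f.map (Int.castRingHom ℂ) with hg
  have hg0 : g ≠ 0 := (Polynomial.map_ne_zero_iff (RingHom.injective_int _)).mpr hf0
  have heval : ∀ y : ℂ, MvPolynomial.eval₂ (Int.castRingHom ℂ) (fun _ => y) c = g.eval y := by
    intro y
    rw [hg, Polynomial.eval_map, hf]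
    exact (MvPolynomial.eval₂_uniqueAlgEquiv (f := c) (φ := Int.castRingHom ℂ) (a := fun _ => y)).symm
  refine ⟨∑ r ∈ g.roots.toFinset, ‖r‖, fun y hy h0 => ?_⟩
  rw [heval] at h0
  have hmem : y ∈ g.roots.toFinset := by
    rw [Multiset.mem_toFinset, Polynomial.mem_roots hg0]; exact h0
  have := Finset.single_le_sum (f := fun r : ℂ => ‖r‖) (fun r _ => norm_nonneg r) hmem
  linarith

section
open UpperHalfPlane MatrixGroups

lemma mp_j_large (B : ℝ) : ∃ Y : ℝ, 1 ≤ Y ∧ ∀ z : ℍ, Y ≤ z.im → B < ‖jInv z‖ := by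
  obtain ⟨Y, h1, h2⟩ := mpr_tendsto (0.06 / (|B| + 1)) (by positivity)
  refine ⟨Y, h1, fun z hz => ?_⟩
  have h3 := h2 z hz
  have h4 := mp_j_lower (h1.trans hz)
  have h5 := mpr_pos z
  rw [lt_div_iff₀ (by positivity)] at h3
  have : |B| < ‖jInv z‖ := by
    by_contra hc
    push Not at hc
    nlinarith
  exact (le_abs_self B).trans_lt this

/-- the factorization holds for points high up -/
lemma mp_factor_high (p : ℕ) [NeZero p] (hp : p.Prime) {P : MvPolynomial (Fin 2) ℤ}
    (hP : IsModularPolynomial p P) : ∃ Y : ℝ, ∀ z : ℍ, Y ≤ z.im →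
      mpF P (jInv z) = ∏ i, (Polynomial.X - Polynomial.C (jInv (mpPt p z i))) := by
  obtain ⟨hirr, hmon, -, hzero⟩ := hP
  obtain ⟨c, hc0, hc⟩ := mp_sep hirr hmon
  obtain ⟨B, hB⟩ := mp_nonvanish c hc0
  obtain ⟨Y1, hY1, hj⟩ := mp_j_large B
  obtain ⟨Y2, hY2, hcusp⟩ := mp_cusp
  obtain ⟨Y3, hY3, hequiv⟩ := mp_cusp_equiv
  have hp0 : (0:ℝ) < p := by exact_mod_cast hp.pos
  have hp1 : (1:ℝ) < p := by exact_mod_cast hp.one_lt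
  have hpC : (p:ℂ) ≠ 0 := by exact_mod_cast hp.ne_zero
  refine ⟨max Y1 (max (p * Y2) Y3), fun z hz => ?_⟩
  have hz1 : Y1 ≤ z.im := (le_max_left _ _).trans hz
  have hz2 : p * Y2 ≤ z.im := ((le_max_left _ _).trans (le_max_right _ _)).trans hz
  have hz3 : Y3 ≤ z.im := ((le_max_right _ _).trans (le_max_right _ _)).trans hz
  have hzpos := z.im_pos
  set f := mpF P (jInv z) with hf
  have hfm : f.Monic := mpF_monic hmon _
  have hfs : f.Separable := hc _ (hB _ (hj z hz1))
  have him : ∀ i, Y2 ≤ (mpPt p z i).im := by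
    intro i
    rcases i with _ | b
    · rw [mpPt_none_im]; nlinarith
    · rw [mpPt_some_im, le_div_iff₀ hp0]; linarith
  have hinj : Function.Injective fun i => jInv (mpPt p z i) := by
    intro i i' h
    obtain ⟨n, hn⟩ := hcusp _ _ (him i) (by linarith [him i']) h
    have hIm := congrArg Complex.im hn
    simp only [Complex.add_im, Complex.intCast_im, add_zero, coe_im] at hIm
    rcases i with _ | b <;> rcases i' with _ | b'
    · rfl
    · rw [mpPt_none_im, mpPt_some_im, eq_div_iff hp0.ne'] at hIm
      have hpp : (1:ℝ) < p * p := by nlinarith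
      exfalso; nlinarith
    · rw [mpPt_none_im, mpPt_some_im, div_eq_iff hp0.ne'] at hIm
      have hpp : (1:ℝ) < p * p := by nlinarith
      exfalso; nlinarith
    · rw [mpPt_some_coe, mpPt_some_coe, div_add' _ _ _ hpC, div_left_inj' hpC] at hn
      have h2 : ((b : ℕ) : ℂ) = (b' : ℕ) + n * p := by linear_combination hn
      have h3 : ((b : ℕ) : ℤ) = (b' : ℕ) + n * p := by exact_mod_cast h2
      have hb := b.2
      have hb' := b'.2
      have hn0 : n * (p:ℤ) = 0 := by
        apply Int.eq_zero_of_abs_lt_dvd (dvd_mul_left (p:ℤ) n)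
        rw [abs_lt]; constructor <;> omega
      congr 1
      exact Fin.ext (by omega)
  have hroot : ∀ x : ℂ, f.IsRoot x ↔ ∃ i, x = jInv (mpPt p z i) := by
    intro x
    rw [Polynomial.IsRoot, hf, mpF_eval, hzero]
    constructor
    · rintro ⟨τ, hτ, a, b, c, d, hdet, hgcd, hx, hy⟩
      obtain ⟨g, hg⟩ := hequiv z ⟨τ, hτ⟩ hz3 hy
      -- pull back to z
      have hτz : τ = ((g • z : ℍ) : ℂ) := by rw [← hg]
      obtain ⟨i, g', hi⟩ := mp_matrix p hp (a * g 0 0 + b * g 1 0) (a * g 0 1 + b * g 1 1)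
        (c * g 0 0 + d * g 1 0) (c * g 0 1 + d * g 1 1) (by
          have hdetg := Matrix.SpecialLinearGroup.det_coe g
          rw [Matrix.det_fin_two] at hdetg
          linear_combination (g 0 0 * g 1 1 - g 0 1 * g 1 0) * hdet + (p : ℤ) * hdetg) z
      refine ⟨i, ?_⟩
      rw [hx, ← mp_jInv_smul g', ← hi]
      congr 1
      have hden : ((g 1 0 : ℤ) : ℂ) * z + (g 1 1 : ℤ) ≠ 0 := by
        have := denom_ne_zero g z
        rwa [ModularGroup.denom_apply] at this
      rw [hτz, coe_specialLinearGroup_apply]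
      simp only [eq_intCast, Complex.ofReal_intCast]
      rw [← mul_div_assoc, ← mul_div_assoc, div_add' _ _ _ hden, div_add' _ _ _ hden,
        div_div_div_cancel_right₀ hden]
      push_cast
      congr 1 <;> ring
    · rintro ⟨i, rfl⟩
      obtain ⟨a, b, c, d, h1, h2, h3⟩ := mp_matrix' p z i
      exact ⟨z, z.im_pos, a, b, c, d, h1, h2, by rw [h3], rfl⟩
  have hsplit : f.Splits := IsAlgClosed.splits f
  have hnodup := Polynomial.nodup_roots hfs
  have hroots : f.roots = (Finset.univ.map ⟨_, hinj⟩ : Finset ℂ).val := by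
    refine (Multiset.Nodup.ext hnodup (Finset.nodup _)).mpr fun x => ?_
    rw [Polynomial.mem_roots hfm.ne_zero, hroot]
    simp [eq_comm]
  rw [hsplit.eq_prod_roots_of_monic hfm, hroots]
  simp

end

end

section

/-! ### The factorization for all points -/

section
open UpperHalfPlane MatrixGroups

lemma mp_jInv_diff : DifferentiableOn ℂ jInv {z : ℂ | 0 < z.im} := by
  have hE : DifferentiableOn ℂ (ModularForm.E₄ ∘ ofComplex) {z : ℂ | 0 < z.im} :=
    mdifferentiable_iff.mp (ModularFormClass.holo ModularForm.E₄)
  have hq : ∀ z ∈ {z : ℂ | 0 < z.im}, Complex.exp (2 * Real.pi * Complex.I * z) ∈ Metric.ball (0:ℂ) 1 := by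
    intro z hz
    have h1 := mp_norm_q ⟨z, hz⟩
    rw [mem_ball_zero_iff, show (z:ℂ) = ((⟨z, hz⟩ : ℍ) : ℂ) from rfl, h1, mpr, Real.exp_lt_one_iff]
    have := Real.pi_pos
    have : 0 < (⟨z, hz⟩ : ℍ).im := hz
    simp only [Left.neg_neg_iff]
    positivity
  have hD : DifferentiableOn ℂ (fun z : ℂ => Δ (Complex.exp (2 * Real.pi * Complex.I * z)))
      {z : ℂ | 0 < z.im} := by
    have hΔ : DifferentiableOn ℂ Δ (Metric.ball 0 1) := by
      unfold Δ
      exact differentiableOn_id.mul (ModularForm.differentiableOn_tprod_one_sub_pow_pow 24)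
    exact hΔ.comp (by fun_prop) hq
  have h := (hE.pow 3).div hD (by
    intro z hz
    have := mp_D_eq ⟨z, hz⟩
    rw [show ((⟨z, hz⟩ : ℍ) : ℂ) = z from rfl] at this
    rw [this]
    exact ModularForm.discriminant_ne_zero _)
  refine h.congr fun z hz => ?_
  have h1 := mp_E4_eq ⟨z, hz⟩
  rw [show ((⟨z, hz⟩ : ℍ) : ℂ) = z from rfl] at h1
  simp only [jInv, _root_.J, h1, Pi.div_apply, Pi.pow_apply, Function.comp]
  rw [ofComplex_apply_of_im_pos hz]

lemma mp_evalBiv_diff (P : MvPolynomial (Fin 2) ℤ) (x : ℂ) :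
    Differentiable ℂ (fun y => evalBiv P x y) := by
  unfold evalBiv
  induction P using MvPolynomial.induction_on with
  | C a => simp only [MvPolynomial.eval₂_C]; fun_prop
  | add p q hp hq => simp only [MvPolynomial.eval₂_add]; exact hp.add hq
  | mul_X p i hp =>
    simp only [MvPolynomial.eval₂_mul, MvPolynomial.eval₂_X]
    refine hp.mul ?_
    fin_cases i
    · exact differentiable_const _
    · exact differentiable_id

lemma mp_open : IsOpen {z : ℂ | 0 < z.im} := isOpen_lt continuous_const Complex.continuous_im

lemma mp_factor (p : ℕ) [NeZero p] (hp : p.Prime) {P : MvPolynomial (Fin 2) ℤ}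
    (hP : IsModularPolynomial p P) (z : ℍ) (x : ℂ) :
    evalBiv P x (jInv z) = ∏ i, (x - jInv (mpPt p z i)) := by
  obtain ⟨Y, hY⟩ := mp_factor_high p hp hP
  have hp0 : (0:ℝ) < p := by exact_mod_cast hp.pos
  set L := fun τ : ℂ => evalBiv P x (jInv τ) with hL
  set S := fun τ : ℂ => (x - jInv (p * τ)) * ∏ b : Fin p, (x - jInv ((τ + (b : ℕ)) / p)) with hS
  have hmem : ∀ w : ℍ, S w = ∏ i, (x - jInv (mpPt p w i)) := by
    intro w
    rw [Fintype.prod_option]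
    rfl
  have hLd : DifferentiableOn ℂ L {z : ℂ | 0 < z.im} :=
    (mp_evalBiv_diff P x).comp_differentiableOn mp_jInv_diff
  have hSd : DifferentiableOn ℂ S {z : ℂ | 0 < z.im} := by
    refine DifferentiableOn.mul ?_ ?_
    · refine (differentiableOn_const _).sub (mp_jInv_diff.comp (by fun_prop) ?_)
      intro w hw
      exact (mpPt p ⟨w, hw⟩ none).im_pos
    · refine DifferentiableOn.fun_finsetProd fun b _ => ?_
      refine (differentiableOn_const _).sub (mp_jInv_diff.comp (by fun_prop) ?_)
      intro w hw
      exact (mpPt p ⟨w, hw⟩ (some b)).im_pos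
  have hLa := hLd.analyticOnNhd mp_open
  have hSa := hSd.analyticOnNhd mp_open
  have hconn : IsPreconnected {z : ℂ | 0 < z.im} :=
    (convex_halfSpace_im_gt 0).isPreconnected
  set M := max Y 0 + 1 with hM
  have hM0 : 0 < M := by have := le_max_right Y 0; linarith
  have hMY : Y < M := by have := le_max_left Y 0; linarith
  have hev : L =ᶠ[nhds ((M : ℂ) * Complex.I)] S := by
    have hopen : IsOpen {w : ℂ | max Y 0 < w.im} := isOpen_lt continuous_const Complex.continuous_im
    have hin : ((M : ℂ) * Complex.I) ∈ {w : ℂ | max Y 0 < w.im} := by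
      have h3 : ((M : ℂ) * Complex.I).im = M := by simp
      show max Y 0 < ((M : ℂ) * Complex.I).im
      rw [h3, hM]
      linarith
    filter_upwards [hopen.mem_nhds hin] with w hw
    have hw' : max Y 0 < w.im := hw
    have hw0 : 0 < w.im := (le_max_right Y 0).trans_lt hw'
    have hwY : Y ≤ w.im := ((le_max_left Y 0).trans_lt hw').le
    have h1 := hY ⟨w, hw0⟩ hwY
    have h2 := congrArg (Polynomial.eval x) h1
    rw [mpF_eval, Polynomial.eval_prod] at h2
    simp only [Polynomial.eval_sub, Polynomial.eval_X, Polynomial.eval_C] at h2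
    rw [← hmem] at h2
    exact h2
  have := hLa.eqOn_of_preconnected_of_eventuallyEq hSa hconn
    (show ((M : ℂ) * Complex.I) ∈ {z : ℂ | 0 < z.im} by simpa using hM0) hev
  rw [← hmem]
  exact this z.im_pos

lemma mpF_factor (p : ℕ) [NeZero p] (hp : p.Prime) {P : MvPolynomial (Fin 2) ℤ}
    (hP : IsModularPolynomial p P) (z : ℍ) :
    mpF P (jInv z) = ∏ i, (Polynomial.X - Polynomial.C (jInv (mpPt p z i))) := by
  apply Polynomial.funext
  intro x
  rw [mpF_eval, mp_factor p hp hP, Polynomial.eval_prod]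
  simp

lemma mp_degree (p : ℕ) (hp : p.Prime) {P : MvPolynomial (Fin 2) ℤ}
    (hP : IsModularPolynomial p P) : MvPolynomial.degreeOf 0 P = p + 1 := by
  have : NeZero p := ⟨hp.ne_zero⟩
  have h := mpF_factor p hp hP I
  rw [← mpF_natDegree hP.2.1 (jInv I), h, Polynomial.natDegree_prod_of_monic _ _
    (fun i _ => Polynomial.monic_X_sub_C _)]
  simp

lemma mp_degree' (p : ℕ) (hp : p.Prime) {P : MvPolynomial (Fin 2) ℤ}
    (hP : IsModularPolynomial p P) : MvPolynomial.degreeOf 1 P = p + 1 := by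
  rw [← mp_degree_swap]
  exact mp_degree p hp (mp_swap hp.pos hP)

/-- every complex number is a value of `j` at a reduced point -/
lemma mp_j_surj (p : ℕ) (hp : p.Prime) {P : MvPolynomial (Fin 2) ℤ}
    (hP : IsModularPolynomial p P) (y : ℂ) : ∃ z : ℍ, 0.866 ≤ z.im ∧ jInv z = y := by
  have hd : (mpF P y).natDegree = p + 1 := by
    rw [mpF_natDegree hP.2.1, mp_degree p hp hP]
  have : (mpF P y).degree ≠ 0 := by
    intro h0
    rw [Polynomial.degree_eq_natDegree (mpF_monic hP.2.1 y).ne_zero, hd] at h0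
    norm_cast at h0
  obtain ⟨x, hx⟩ := IsAlgClosed.exists_root _ this
  rw [Polynomial.IsRoot, mpF_eval, hP.2.2.2] at hx
  obtain ⟨τ, hτ, a, b, c, d, -, -, -, hy⟩ := hx
  obtain ⟨w, hw⟩ : ∃ w : ℍ, (w : ℂ) = τ := ⟨⟨τ, hτ⟩, rfl⟩
  obtain ⟨g, hg⟩ := mp_reduce w
  refine ⟨g • w, hg, ?_⟩
  rw [mp_jInv_smul, hw, hy]

end

end

section

/-! ### Cauchy estimate for coefficients -/

noncomputable section

open UpperHalfPlane

lemma mp_cauchy1 (f : Polynomial ℂ) (B : ℝ) (h : ∀ x : ℂ, ‖x‖ = 1 → ‖f.eval x‖ ≤ B) (n : ℕ) :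
    ‖f.coeff n‖ ≤ B := by
  have h1 := Complex.norm_iteratedDeriv_le_of_forall_mem_sphere_norm_le (c := 0) (R := 1) (C := B)
    (f := fun x => f.eval x) n one_pos f.differentiable.diffContOnCl
    (fun x hx => h x (by simpa using hx))
  have h2 : iteratedDeriv n (fun x => f.eval x) 0 = (n.factorial : ℂ) * f.coeff n := by
    have h4 : ∀ k : ℕ, deriv^[k] (fun x => f.eval x) =
        fun x => (Polynomial.derivative^[k] f).eval x := by
      intro k
      induction k with
      | zero => rfl
      | succ k ih =>
        rw [Function.iterate_succ_apply', ih, Function.iterate_succ_apply']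
        funext x
        exact Polynomial.deriv _
    rw [iteratedDeriv_eq_iterate, h4]
    beta_reduce
    rw [← Polynomial.coeff_zero_eq_eval_zero, Polynomial.coeff_iterate_derivative]
    simp [Nat.descFactorial_self]
  rw [h2, norm_mul] at h1
  simp only [Complex.norm_natCast, one_pow, div_one] at h1
  have h3 : (0 : ℝ) < n.factorial := by positivity
  exact le_of_mul_le_mul_left h1 h3

/-- the `X^i` coefficient as polynomial in `Y` -/
def mpG (c : MvPolynomial (Fin 1) ℤ) : Polynomial ℂ :=
  (MvPolynomial.finSuccEquiv ℤ 0 c).map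
    (MvPolynomial.eval₂Hom (Int.castRingHom ℂ) (fun i : Fin 0 => i.elim0))

lemma mpG_eval (c : MvPolynomial (Fin 1) ℤ) (y : ℂ) : (mpG c).eval y =
    MvPolynomial.eval₂Hom (Int.castRingHom ℂ) (fun _ : Fin 1 => y) c := by
  rw [mpG, MvPolynomial.coe_eval₂Hom]
  induction c using MvPolynomial.induction_on with
  | C a =>
    rw [MvPolynomial.eval₂_C, MvPolynomial.finSuccEquiv_apply, MvPolynomial.coe_eval₂Hom,
      MvPolynomial.eval₂_C, RingHom.comp_apply, Polynomial.map_C, Polynomial.eval_C,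
      MvPolynomial.coe_eval₂Hom, MvPolynomial.eval₂_C]
  | add p q hp hq => simp only [map_add, Polynomial.map_add, Polynomial.eval_add, hp, hq,
      MvPolynomial.eval₂_add]
  | mul_X p i hp =>
    simp only [map_mul, Polynomial.map_mul, Polynomial.eval_mul, hp, MvPolynomial.eval₂_mul]
    congr 1
    have : i = 0 := Subsingleton.elim _ _
    subst this
    simp [MvPolynomial.finSuccEquiv_X_zero]

lemma mpG_coeff (c : MvPolynomial (Fin 1) ℤ) (k : ℕ) :
    (mpG c).coeff k = (MvPolynomial.coeff (Finsupp.cons k (0 : Fin 0 →₀ ℕ)) c : ℤ) := by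
  rw [mpG, Polynomial.coeff_map, ← MvPolynomial.finSuccEquiv_coeff_coeff]
  conv_lhs => rw [MvPolynomial.eq_C_of_isEmpty ((MvPolynomial.finSuccEquiv ℤ 0 c).coeff k)]
  rw [MvPolynomial.coe_eval₂Hom, MvPolynomial.eval₂_C]
  simp

lemma mp_cauchy2 (P : MvPolynomial (Fin 2) ℤ) (B : ℝ)
    (h : ∀ x y : ℂ, ‖x‖ = 1 → ‖y‖ = 1 → ‖evalBiv P x y‖ ≤ B) (m : Fin 2 →₀ ℕ) :
    ((MvPolynomial.coeff m P).natAbs : ℝ) ≤ B := by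
  have key : ∀ i k : ℕ, ‖(mpG ((MvPolynomial.finSuccEquiv ℤ 1 P).coeff i)).coeff k‖ ≤ B := by
    intro i k
    refine mp_cauchy1 _ B (fun y hy => ?_) k
    rw [mpG_eval, ← Polynomial.coeff_map]
    exact mp_cauchy1 (mpF P y) B (fun x hx => by rw [mpF_eval]; exact h x y hx hy) i
  have h1 := key (m 0) (m 1)
  rw [mpG_coeff, MvPolynomial.finSuccEquiv_coeff_coeff] at h1
  have h2 : Finsupp.cons (m 0) (Finsupp.cons (m 1) (0 : Fin 0 →₀ ℕ)) = m := by
    ext i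
    fin_cases i
    · simp
    · show (Finsupp.cons (m 0) (Finsupp.cons (m 1) (0 : Fin 0 →₀ ℕ)) : Fin 2 →₀ ℕ) (Fin.succ 0) = _
      rw [Finsupp.cons_succ, Finsupp.cons_zero]
      rfl
  rw [h2, Complex.norm_intCast] at h1
  rwa [Nat.cast_natAbs, Int.cast_abs]

/-- pointwise upper bound -/
lemma mp_eval_bound (p : ℕ) (hp : p.Prime) {P : MvPolynomial (Fin 2) ℤ}
    (hP : IsModularPolynomial p P) (x y : ℂ) (hx : ‖x‖ = 1) (hy : ‖y‖ = 1) :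
    ‖evalBiv P x y‖ ≤ Real.exp (6 * (p - 1) * Real.log p + 3.3 * (p + 1) + 12.366 * p) := by
  have : NeZero p := ⟨hp.ne_zero⟩
  have hp0 : (0 : ℝ) < p := by exact_mod_cast hp.pos
  obtain ⟨z, hz, rfl⟩ := mp_j_surj p hp hP y
  have hz1 := mp_im_lt_one hy.le
  have hD := mpD_lower hz hz1.le
  rw [mp_factor p hp hP, norm_prod]
  choose g hg using fun i => mp_reduce (mpPt p z i)
  have hs := mp_sum_sqrt p hp z hz hz1.le g
  have hprod := mpD_prod p hp z
  have h1 : ∀ i, ‖x - jInv (mpPt p z i)‖ ≤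
      Real.exp (6 * √(g i • mpPt p z i).im - 3.3) / mpD (mpPt p z i) := by
    intro i
    have hpos := mpD_pos (mpPt p z i)
    have h2 : ‖x - jInv (mpPt p z i)‖ ≤ 1 + mpE (mpPt p z i) / mpD (mpPt p z i) := by
      rw [← mp_norm_j, ← hx]
      exact norm_sub_le _ _
    refine h2.trans ?_
    rw [le_div_iff₀ hpos, add_mul, div_mul_cancel₀ _ hpos.ne', one_mul]
    have h3 := mp_upper (hg i)
    rw [mpE_smul, mpD_smul] at h3
    linarith
  refine (Finset.prod_le_prod (fun i _ => norm_nonneg _) (fun i _ => h1 i)).trans ?_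
  rw [Finset.prod_div_distrib, ← Real.exp_sum]
  have hDp : 0 < ∏ i, mpD (mpPt p z i) := Finset.prod_pos fun i _ => mpD_pos _
  rw [div_le_iff₀ hDp]
  have hpp : (p : ℝ) ^ (6 * (p - 1)) = Real.exp (6 * (p - 1) * Real.log p) := by
    conv_lhs => rw [← Real.exp_log hp0, ← Real.exp_nat_mul]
    push_cast [Nat.cast_sub hp.one_le]
    rfl
  have hDpe : Real.exp (-6.6 * (p + 1)) ≤ mpD z ^ (p + 1) := by
    refine le_trans (le_of_eq ?_) (pow_le_pow_left₀ (Real.exp_pos _).le hD _)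
    rw [← Real.exp_nat_mul]
    push_cast
    ring_nf
  rw [hpp] at hprod
  have h4 : ∏ i, mpD (mpPt p z i) = mpD z ^ (p + 1) * Real.exp (-(6 * (p - 1) * Real.log p)) := by
    rw [← hprod, mul_assoc, ← Real.exp_add]
    simp
  rw [h4]
  refine le_trans ?_ (mul_le_mul_of_nonneg_left
    (mul_le_mul_of_nonneg_right hDpe (Real.exp_pos _).le) (Real.exp_pos _).le)
  rw [← Real.exp_add, ← Real.exp_add, Real.exp_le_exp, Finset.sum_sub_distrib, ← Finset.mul_sum]
  simp only [Finset.sum_const, Finset.card_univ, Fintype.card_option, Fintype.card_fin,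
    nsmul_eq_mul]
  push_cast
  linarith

def mpH (P : MvPolynomial (Fin 2) ℤ) : ℕ := P.support.sup fun m => (MvPolynomial.coeff m P).natAbs

lemma mpH_pos {P : MvPolynomial (Fin 2) ℤ} (h : P ≠ 0) : 0 < mpH P := by
  obtain ⟨m, hm⟩ := MvPolynomial.exists_coeff_ne_zero h
  refine lt_of_lt_of_le (Int.natAbs_pos.mpr hm) ?_
  exact Finset.le_sup (f := fun m => (MvPolynomial.coeff m P).natAbs)
    (MvPolynomial.mem_support_iff.mpr hm)

lemma mpH_le {P : MvPolynomial (Fin 2) ℤ} {B : ℝ} (hB : 0 ≤ B)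
    (h : ∀ m, ((MvPolynomial.coeff m P).natAbs : ℝ) ≤ B) : (mpH P : ℝ) ≤ B := by
  have : mpH P ≤ ⌊B⌋₊ := Finset.sup_le fun m _ => Nat.le_floor (h m)
  exact (Nat.cast_le.mpr this).trans (Nat.floor_le hB)

lemma mp_upper_height (p : ℕ) (hp : p.Prime) {P : MvPolynomial (Fin 2) ℤ}
    (hP : IsModularPolynomial p P) :
    polyHeight P ≤ 6 * (p - 1) * Real.log p + 3.3 * (p + 1) + 12.366 * p := by
  have h1 := mpH_le (Real.exp_pos _).le (mp_cauchy2 P _ (mp_eval_bound p hp hP))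
  have h2 : (0 : ℝ) < mpH P := by exact_mod_cast mpH_pos hP.1.ne_zero
  have h3 := Real.log_le_log h2 h1
  rw [Real.log_exp] at h3
  exact h3

end

end

section

/-! ### Lower bound for the height -/

noncomputable section

open UpperHalfPlane

lemma mp_card_support (P : MvPolynomial (Fin 2) ℤ) (d : ℕ)
    (h0 : MvPolynomial.degreeOf 0 P = d) (h1 : MvPolynomial.degreeOf 1 P = d) :
    P.support.card ≤ (d + 1) ^ 2 := by
  have : P.support.card ≤ (Finset.range (d + 1) ×ˢ Finset.range (d + 1)).card := by
    refine Finset.card_le_card_of_injOn (fun m => (m 0, m 1)) ?_ ?_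
    · intro m hm
      have hm' : m ∈ P.support := hm
      have a0 := MvPolynomial.monomial_le_degreeOf 0 hm'
      have a1 := MvPolynomial.monomial_le_degreeOf 1 hm'
      simp only [Finset.coe_product, Finset.coe_range, Set.mem_prod, Set.mem_Iio]
      omega
    · intro m _ m' _ h
      simp only [Prod.mk.injEq] at h
      ext i
      fin_cases i
      · exact h.1
      · exact h.2
  refine this.trans (le_of_eq ?_)
  rw [Finset.card_product, Finset.card_range, sq]

lemma mp_eval_le_height (P : MvPolynomial (Fin 2) ℤ) (d : ℕ)
    (h0 : MvPolynomial.degreeOf 0 P = d) (h1 : MvPolynomial.degreeOf 1 P = d) (x y : ℂ)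
    (Y : ℝ) (hY : 1 ≤ Y) (hx : ‖x‖ = 1) (hy : ‖y‖ ≤ Y) :
    ‖evalBiv P x y‖ ≤ ((d : ℝ) + 1) ^ 2 * (mpH P * Y ^ d) := by
  rw [evalBiv, MvPolynomial.eval₂_eq']
  have hterm : ∀ m ∈ P.support, ‖(Int.castRingHom ℂ) (MvPolynomial.coeff m P) *
      ∏ i, (![x, y] : Fin 2 → ℂ) i ^ m i‖ ≤ mpH P * Y ^ d := by
    intro m hm
    rw [norm_mul, Fin.prod_univ_two, norm_mul, norm_pow, norm_pow]
    have e0 : (![x, y] : Fin 2 → ℂ) 0 = x := rfl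
    have e1 : (![x, y] : Fin 2 → ℂ) 1 = y := rfl
    rw [e0, e1, hx, one_pow, one_mul]
    have a1 := MvPolynomial.monomial_le_degreeOf 1 hm
    have hc : ‖(Int.castRingHom ℂ) (MvPolynomial.coeff m P)‖ ≤ mpH P := by
      have : (MvPolynomial.coeff m P).natAbs ≤ mpH P :=
        Finset.le_sup (f := fun m => (MvPolynomial.coeff m P).natAbs) hm
      rw [eq_intCast, Complex.norm_intCast, ← Int.cast_abs, ← Nat.cast_natAbs]
      exact_mod_cast this
    refine mul_le_mul hc ?_ (by positivity) (by positivity)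
    calc ‖y‖ ^ m 1 ≤ Y ^ m 1 := pow_le_pow_left₀ (norm_nonneg _) hy _
      _ ≤ Y ^ d := pow_le_pow_right₀ hY (by omega)
  refine (norm_sum_le_of_le _ hterm).trans ?_
  rw [Finset.sum_const, nsmul_eq_mul]
  have hcard := mp_card_support P d h0 h1
  refine mul_le_mul_of_nonneg_right ?_ (by positivity)
  exact_mod_cast hcard

lemma mp_lower_raw (p : ℕ) (hp : p.Prime) {P : MvPolynomial (Fin 2) ℤ}
    (hP : IsModularPolynomial p P) (z : ℍ) (Y : ℝ) (hY : 1 ≤ Y) (hy : ‖jInv z‖ ≤ Y) :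
    (0.001 : ℝ) ^ (p + 1) * (p : ℝ) ^ (6 * (p - 1)) ≤
      ((p : ℝ) + 2) ^ 3 * mpH P * Y ^ (p + 1) * mpD z ^ (p + 1) := by
  have : NeZero p := ⟨hp.ne_zero⟩
  have hd0 := mp_degree p hp hP
  have hd1 := mp_degree' p hp hP
  set B : ℝ := (((p + 1 : ℕ) : ℝ) + 1) ^ 2 * (mpH P * Y ^ (p + 1)) with hB
  have hcoef : ∀ i, ‖(mpF P (jInv z)).coeff i‖ ≤ B := fun i =>
    mp_cauchy1 _ B (fun x hx => by
      rw [mpF_eval]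
      exact mp_eval_le_height P (p + 1) hd0 hd1 x _ Y hY hx hy) i
  have hM1 : (mpF P (jInv z)).mahlerMeasure ≤ ((p : ℝ) + 2) * B := by
    refine (Polynomial.mahlerMeasure_le_sum_norm_coeff _).trans ?_
    rw [Polynomial.sum_def]
    refine (Finset.sum_le_sum (fun i _ => hcoef i)).trans ?_
    rw [Finset.sum_const, nsmul_eq_mul]
    refine mul_le_mul_of_nonneg_right ?_ (by positivity)
    have h3 := Polynomial.card_supp_le_succ_natDegree (mpF P (jInv z))
    rw [mpF_natDegree hP.2.1, hd0] at h3
    calc (((mpF P (jInv z)).support.card : ℕ) : ℝ) ≤ ((p + 1 + 1 : ℕ) : ℝ) := by exact_mod_cast h3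
      _ = (p : ℝ) + 2 := by push_cast; ring
  have hM2 : (mpF P (jInv z)).mahlerMeasure = ∏ i, max 1 ‖jInv (mpPt p z i)‖ := by
    rw [mpF_factor p hp hP, Finset.prod_eq_multiset_prod,
      Polynomial.prod_mahlerMeasure_eq_mahlerMeasure_prod, Multiset.map_map,
      Finset.prod_eq_multiset_prod]
    simp only [Function.comp_def, Polynomial.mahlerMeasure_X_sub_C]
  have hDp : 0 < ∏ i, mpD (mpPt p z i) := Finset.prod_pos fun i _ => mpD_pos _
  have hlow : (0.001 : ℝ) ^ (p + 1) ≤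
      (∏ i, max 1 ‖jInv (mpPt p z i)‖) * ∏ i, mpD (mpPt p z i) := by
    rw [← Finset.prod_mul_distrib]
    have hc : (0.001 : ℝ) ^ (p + 1) = ∏ _i : Option (Fin p), (0.001 : ℝ) := by
      rw [Finset.prod_const, Finset.card_univ, Fintype.card_option, Fintype.card_fin]
    rw [hc]
    refine Finset.prod_le_prod (fun i _ => by norm_num) (fun i _ => ?_)
    have hpos := mpD_pos (mpPt p z i)
    obtain ⟨g, hg⟩ := mp_reduce (mpPt p z i)
    have h3 := mp_lower_max hg
    rw [mpE_smul, mpD_smul] at h3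
    refine h3.trans (le_of_eq ?_)
    rw [mp_norm_j, max_mul_of_nonneg _ _ hpos.le, div_mul_cancel₀ _ hpos.ne', one_mul, max_comm]
  rw [← mpD_prod p hp z, ← mul_assoc]
  refine mul_le_mul_of_nonneg_right ?_ (by positivity)
  refine hlow.trans ?_
  refine mul_le_mul_of_nonneg_right ?_ hDp.le
  rw [← hM2]
  refine hM1.trans (le_of_eq ?_)
  rw [hB]
  push_cast
  ring

lemma mp_lower_height : ∃ K : ℝ, 0 ≤ K ∧ ∀ (p : ℕ) (_ : p.Prime) (P : MvPolynomial (Fin 2) ℤ)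
    (_ : IsModularPolynomial p P), 6 * (p : ℝ) * Real.log p - K * p ≤ polyHeight P := by
  set Y : ℝ := max 1 ‖jInv (I : ℍ)‖ with hY
  have hY1 : 1 ≤ Y := le_max_left _ _
  have hY2 : ‖jInv (I : ℍ)‖ ≤ Y := le_max_right _ _
  have hD := mpD_pos I
  set K0 : ℝ := |Real.log Y + Real.log (mpD I) - Real.log 0.001| with hK0
  refine ⟨12 + 2 * K0, by positivity, fun p hp P hP => ?_⟩
  have hraw := mp_lower_raw p hp hP I Y hY1 hY2
  have hp0 : (0 : ℝ) < p := by exact_mod_cast hp.pos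
  have hp1 : (1 : ℝ) ≤ p := by exact_mod_cast hp.one_le
  have hH : (0 : ℝ) < mpH P := by exact_mod_cast mpH_pos hP.1.ne_zero
  have hlog := Real.log_le_log (by positivity) hraw
  have hYp : 0 < Y := by linarith
  rw [Real.log_mul (by positivity) (by positivity), Real.log_mul (by positivity) (by positivity),
    Real.log_mul (by positivity) (by positivity), Real.log_mul (by positivity) (by positivity),
    Real.log_pow, Real.log_pow, Real.log_pow, Real.log_pow, Real.log_pow] at hlog
  push_cast [Nat.cast_sub hp.one_le] at hlog
  have l1 : Real.log p ≤ p := (Real.log_le_sub_one_of_pos hp0).trans (by linarith)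
  have l2 : Real.log ((p : ℝ) + 2) ≤ p + 1 :=
    (Real.log_le_sub_one_of_pos (by linarith)).trans (by linarith)
  have hK : Real.log Y + Real.log (mpD I) - Real.log 0.001 ≤ K0 := le_abs_self _
  have hK00 : 0 ≤ K0 := abs_nonneg _
  have hph : polyHeight P = Real.log (mpH P) := rfl
  rw [hph]
  have k1 := mul_le_mul_of_nonneg_left hK (show (0 : ℝ) ≤ p + 1 by linarith)
  have k2 := mul_le_mul_of_nonneg_right hp1 hK00
  linarith

/-- For a family `Φ_p` of modular polynomials of prime level: the degrees in each
variable equal `p + 1`, the explicit height bound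
`h(Φ_p) ≤ 6 p log p + 16 p + 14 √p log p` holds, and `h(Φ_p) = 6 p log p + O(p)`. -/
theorem mp_main_aux
    (Φ : ℕ → MvPolynomial (Fin 2) ℤ)
    (hΦ : ∀ p : ℕ, p.Prime → IsModularPolynomial p (Φ p)) :
    (∀ p : ℕ, p.Prime →
      MvPolynomial.degreeOf 0 (Φ p) = p + 1 ∧
      MvPolynomial.degreeOf 1 (Φ p) = p + 1 ∧
      polyHeight (Φ p) ≤
        6 * (p : ℝ) * Real.log p + 16 * p + 14 * Real.sqrt p * Real.log p) ∧
    ∃ C : ℝ, ∀ p : ℕ, p.Prime →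
      |polyHeight (Φ p) - 6 * (p : ℝ) * Real.log p| ≤ C * p := by
  have hL : ∀ p : ℕ, p.Prime → (0.69 : ℝ) ≤ Real.log p := by
    intro p hp
    have h2 : (2 : ℝ) ≤ p := by exact_mod_cast hp.two_le
    have := Real.log_le_log (by norm_num) h2
    have := Real.log_two_gt_d9
    linarith
  constructor
  · intro p hp
    refine ⟨mp_degree p hp (hΦ p hp), mp_degree' p hp (hΦ p hp), ?_⟩
    have h := mp_upper_height p hp (hΦ p hp)
    have h1 := hL p hp
    have h2 : (2 : ℝ) ≤ p := by exact_mod_cast hp.two_le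
    have h3 : 1 ≤ √(p : ℝ) := Real.one_le_sqrt.mpr (by linarith)
    have h4 := mul_le_mul_of_nonneg_right h3 (show (0 : ℝ) ≤ Real.log p by linarith)
    linarith
  · obtain ⟨K, hK, hlow⟩ := mp_lower_height
    refine ⟨20 + K, fun p hp => ?_⟩
    have h := mp_upper_height p hp (hΦ p hp)
    have h' := hlow p hp _ (hΦ p hp)
    have h1 := hL p hp
    have h2 : (2 : ℝ) ≤ p := by exact_mod_cast hp.two_le
    have h5 : 0 ≤ K * p := by positivity
    rw [abs_le]
    constructor <;> linarith

end

end

/-- For a family `Φ_p` of modular polynomials of prime level: the degrees in each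
variable equal `p + 1`, the explicit height bound
`h(Φ_p) ≤ 6 p log p + 16 p + 14 √p log p` holds, and `h(Φ_p) = 6 p log p + O(p)`. -/
theorem modularPolynomial_prime_degree_and_height
    (Φ : ℕ → MvPolynomial (Fin 2) ℤ)
    (hΦ : ∀ p : ℕ, p.Prime → IsModularPolynomial p (Φ p)) :
    (∀ p : ℕ, p.Prime →
      MvPolynomial.degreeOf 0 (Φ p) = p + 1 ∧
      MvPolynomial.degreeOf 1 (Φ p) = p + 1 ∧
      polyHeight (Φ p) ≤
        6 * (p : ℝ) * Real.log p + 16 * p + 14 * Real.sqrt p * Real.log p) ∧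
    ∃ C : ℝ, ∀ p : ℕ, p.Prime →
      |polyHeight (Φ p) - 6 * (p : ℝ) * Real.log p| ≤ C * p := by
  exact mp_main_aux Φ hΦ
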